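/- arXiv:math/0508573 — 2 statements merged into one kernel-verified Lean document; each statement's English description precedes it below -/
import Mathlib

section
/- Let n ≥ 1, J ⊆ {1,…,n}, σ_{ij} ∈ {1,−1}, and let q = |J|. Regard ℂ as an A_{J,σ}-module via the augmentation sending each generator v_i to 0. Then for every m ≥ 0, dim_ℂ Ext^m_{A_{J,σ}}(ℂ,ℂ) equals the number of functions a : {1,…,n} → ℕ with a_1 + ⋯ + a_n = m and a_i ≤ 1 for every i ∉ J; equivalently, the Poincaré series Σ_{m≥0} dim_ℂ Ext^m_{A_{J,σ}}(ℂ,ℂ) z^m equals (1+z)^{n−q}/(1−z)^{q}. In particular, ⊕_{m≥0} Ext^m_{A_{J,σ}}(ℂ,ℂ) is finite-dimensional if and only if J = ∅. -/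
open CategoryTheory FreeAlgebra DirectSum

/-- The defining relations of the algebra `A_{J,σ}`: `v_i v_j = σ_{ij} v_j v_i` for `i < j`,
and `v_i² = 0` for `i ∈ J`. -/
def colorRel (n : ℕ) (J : Finset (Fin n)) (σ : Fin n → Fin n → ℂ) :
    FreeAlgebra ℂ (Fin n) → FreeAlgebra ℂ (Fin n) → Prop := fun x y =>
  (∃ i j : Fin n, i < j ∧ x = ι ℂ i * ι ℂ j ∧ y = σ i j • (ι ℂ j * ι ℂ i)) ∨
  (∃ i ∈ J, x = ι ℂ i * ι ℂ i ∧ y = 0)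

/-- `Ext^m_R(ℂ,ℂ)` as a ℂ-module, where `ℂ` is an `R`-module via the augmentation `ε`. -/
noncomputable def extC (R : Type) [Ring R] [Algebra ℂ R] (ε : R →ₐ[ℂ] ℂ) (m : ℕ) :
    ModuleCat ℂ :=
  letI : Module R ℂ := Module.compHom ℂ ε.toRingHom
  ((Ext ℂ (ModuleCat R) m).obj (Opposite.op (ModuleCat.of R ℂ))).obj (ModuleCat.of R ℂ)

/-- `dim_ℂ Ext^m_R(ℂ,ℂ)`. -/
noncomputable def extDim (R : Type) [Ring R] [Algebra ℂ R] (ε : R →ₐ[ℂ] ℂ) (m : ℕ) : ℕ :=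
  Module.finrank ℂ (extC R ε m)

/-!
The trivial module has a minimal free resolution of Koszul type: in degree `m` its basis is the set
of exponents `a` with `∑ i, a i = m` and `a i ≤ 1` for `i ∉ J`, and its differential is a sum of
components `D j` which lower `a j` by one and multiply by `v j`, with coefficients chosen so that
different components anticommute. Since the ordered monomials form a basis (their independence is
witnessed by weighted shift operators on the span of all exponents), the complex is multigraded by
weight, the exponent `a` plus the exponent of the monomial. Moving a factor `v i` back from the
monomial to the exponent gives `H i`, which inverts `D i` in all weights involving `i` and
anticommutes with `D j` for `j ≠ i`; using in each nonzero weight a single such `H i` contracts the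
complex onto weight zero. The entries of the differential lie in the augmentation ideal, so
`Hom(-, k)` kills it, and `Ext^m(k, k)` has a basis indexed by the exponents in degree `m`. Their
generating function is a product over `i` of `1 / (1 - z)` for `i ∈ J` and `1 + z` for `i ∉ J`.
-/

section Homological

universe u

variable {A : Type u} [Ring A]

section Resolution

variable {X : ℕ → Type u} [∀ m, AddCommGroup (X m)] [∀ m, Module A (X m)]
  {M : Type u} [AddCommGroup M] [Module A M]
  {d : ∀ m, X (m + 1) →ₗ[A] X m} {aug : X 0 →ₗ[A] M}

/-- The chain complex of modules with objects `X m` and differentials `d m`. -/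
noncomputable def moduleComplex (hd : ∀ m, Function.Exact (d (m + 1)) (d m)) :
    ChainComplex (ModuleCat A) ℕ :=
  ChainComplex.of (fun m => ModuleCat.of A (X m)) (fun m => ModuleCat.ofHom (d m)) fun m =>
    ModuleCat.hom_ext (hd m).linearMap_comp_eq_zero

theorem moduleComplex_d (hd : ∀ m, Function.Exact (d (m + 1)) (d m)) (m : ℕ) :
    (moduleComplex hd).d (m + 1) m = ModuleCat.ofHom (d m) :=
  ChainComplex.of_d (fun m => ModuleCat.of A (X m)) (fun m => ModuleCat.ofHom (d m)) m

/-- The augmentation of `moduleComplex hd` onto `M`, as a map of complexes. -/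
noncomputable def moduleComplexAugmentation (hd : ∀ m, Function.Exact (d (m + 1)) (d m))
    (haug : Function.Exact (d 0) aug) :
    moduleComplex hd ⟶ (ChainComplex.single₀ (ModuleCat A)).obj (ModuleCat.of A M) :=
  (ChainComplex.toSingle₀Equiv _ _).symm ⟨ModuleCat.ofHom aug, by
    rw [moduleComplex_d]
    exact ModuleCat.hom_ext haug.linearMap_comp_eq_zero⟩

theorem quasiIso_moduleComplexAugmentation (hd : ∀ m, Function.Exact (d (m + 1)) (d m))
    (haug : Function.Exact (d 0) aug) (hsurj : Function.Surjective aug) :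
    QuasiIso (moduleComplexAugmentation hd haug) where
  quasiIsoAt
    | 0 => by
      rw [ChainComplex.quasiIsoAt₀_iff, ShortComplex.quasiIso_iff_of_zeros' _
        ((moduleComplex hd).shape 0 0 (by simp)) rfl rfl]
      have haug_f : (moduleComplexAugmentation hd haug).f 0 = ModuleCat.ofHom aug :=
        ChainComplex.toSingle₀Equiv_symm_apply_f_zero _ _
      constructor
      · rw [ShortComplex.ShortExact.moduleCat_exact_iff_function_exact]
        change Function.Exact ((moduleComplex hd).d 1 0)
          ((moduleComplexAugmentation hd haug).f 0)
        rw [moduleComplex_d, haug_f]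
        exact haug
      · rw [ModuleCat.epi_iff_surjective]
        change Function.Surjective ((moduleComplexAugmentation hd haug).f 0)
        rw [haug_f]
        exact hsurj
    | m + 1 => by
      rw [quasiIsoAt_iff_exactAt' (hL := ChainComplex.exactAt_succ_single_obj ..),
        HomologicalComplex.exactAt_iff' _ (m + 2) (m + 1) m (by simp) (by simp),
        ShortComplex.ShortExact.moduleCat_exact_iff_function_exact]
      change Function.Exact ((moduleComplex hd).d (m + 1 + 1) (m + 1))
        ((moduleComplex hd).d (m + 1) m)
      rw [moduleComplex_d, moduleComplex_d]
      exact hd m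

/-- The projective resolution of `M` given by an exact sequence `⋯ → X 1 → X 0 → M → 0` of
modules with all `X m` projective. -/
noncomputable def moduleResolution [∀ m, Module.Projective A (X m)]
    (hd : ∀ m, Function.Exact (d (m + 1)) (d m)) (haug : Function.Exact (d 0) aug)
    (hsurj : Function.Surjective aug) : ProjectiveResolution (ModuleCat.of A M) where
  complex := moduleComplex hd
  projective m := inferInstanceAs (Projective (ModuleCat.of A (X m)))
  π := moduleComplexAugmentation hd haug
  quasiIso := quasiIso_moduleComplexAugmentation hd haug hsurj

end Resolution

/-- If every differential of a projective resolution of `X` vanishes under `Hom(-, Y)`, then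
`Ext^m(X, Y)` is `Hom(P_m, Y)`. -/
noncomputable def extIsoOfMinimal (k : Type*) [Ring k] {C : Type*} [Category C] [Abelian C]
    [Linear k C] [EnoughProjectives C] {X Y : C} (P : ProjectiveResolution X)
    (hP : ∀ m (f : P.complex.X m ⟶ Y), P.complex.d (m + 1) m ≫ f = 0) (m : ℕ) :
    ((Ext k C m).obj (Opposite.op X)).obj Y ≅
      ((linearYoneda k C).obj Y).obj (Opposite.op (P.complex.X m)) :=
  have hd (i j : ℕ) : (P.complex.linearYonedaObj k Y).d i j = 0 := by
    by_cases hij : i + 1 = j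
    · subst hij
      ext f : 2
      exact hP i f
    · exact HomologicalComplex.shape _ _ _ (by simpa using hij)
  P.isoExt m Y ≪≫ (ShortComplex.HomologyData.ofZeros _ (hd _ _) (hd _ _)).left.homologyIso

/-- Morphisms out of a free module are families indexed by its basis. -/
noncomputable def homEquivOfBasis {ι k : Type*} {N M : Type u} [Field k] [Algebra k A]
    [AddCommGroup N] [Module A N] [AddCommGroup M] [Module A M] [Module k M] [IsScalarTower k A M]
    (b : Module.Basis ι A N) :
    ((linearYoneda k (ModuleCat A)).obj (ModuleCat.of A M)).obj (Opposite.op (ModuleCat.of A N))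
      ≃ₗ[k] (ι → M) where
  toFun (f : ModuleCat.of A N ⟶ ModuleCat.of A M) i := f.hom (b i)
  map_add' _ _ := rfl
  map_smul' c (f : ModuleCat.of A N ⟶ ModuleCat.of A M) :=
    funext fun i => algebraMap_smul A c (f.hom (b i))
  invFun g := ModuleCat.ofHom (b.constr ℕ g)
  left_inv (f : ModuleCat.of A N ⟶ ModuleCat.of A M) := ModuleCat.hom_ext (b.constr_self ℕ f.hom)
  right_inv g := funext fun i => b.constr_basis ℕ g i

/-- A minimal free resolution of `M` with bases indexed by `ι m` identifies `Ext^m(M, N)` with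
`N`-valued functions on `ι m`. -/
noncomputable def extEquivOfMinimal {k : Type u} [Field k] [Algebra k A]
    {X : ℕ → Type u} [∀ m, AddCommGroup (X m)] [∀ m, Module A (X m)]
    {M N : Type u} [AddCommGroup M] [Module A M]
    [AddCommGroup N] [Module A N] [Module k N] [IsScalarTower k A N]
    {d : ∀ m, X (m + 1) →ₗ[A] X m} {aug : X 0 →ₗ[A] M} {ι : ℕ → Type*}
    (b : ∀ m, Module.Basis (ι m) A (X m)) (hd : ∀ m, Function.Exact (d (m + 1)) (d m))
    (haug : Function.Exact (d 0) aug) (hsurj : Function.Surjective aug)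
    (hmin : ∀ m (f : X m →ₗ[A] N), f ∘ₗ d m = 0) (m : ℕ) :
    ((Ext k (ModuleCat A) m).obj (Opposite.op (ModuleCat.of A M))).obj (ModuleCat.of A N) ≃ₗ[k]
      (ι m → N) :=
  have (m : ℕ) : Module.Projective A (X m) := .of_basis (b m)
  (extIsoOfMinimal k (moduleResolution hd haug hsurj) (fun m f => by
    change (moduleComplex hd).d (m + 1) m ≫ f = 0
    rw [moduleComplex_d]
    exact ModuleCat.hom_ext (hmin m f.hom)) m).toLinearEquiv ≪≫ₗ homEquivOfBasis (b m)

end Homological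

/-- The exponent of the single variable `v i`. -/
abbrev unitExponent {n : ℕ} (i : Fin n) : Fin n → ℕ :=
  Pi.single i 1

local notation "δ" => unitExponent

section Exponents

variable {n : ℕ}

theorem exists_eq_add_single {a : Fin n → ℕ} {i : Fin n} (hi : a i ≠ 0) :
    ∃ b, a = b + δ i := by
  refine ⟨a - δ i, (tsub_add_cancel_of_le fun j => ?_).symm⟩
  obtain rfl | hj := eq_or_ne j i
  · simpa using Nat.one_le_iff_ne_zero.2 hi
  · simp [hj]

theorem exponent_induction {P : (Fin n → ℕ) → Prop} (zero : P 0)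
    (add_single : ∀ b i, P b → P (b + δ i)) (b : Fin n → ℕ) : P b := by
  induction hm : ∑ i, b i generalizing b with
  | zero => rwa [show b = 0 from funext fun i => by simpa using Finset.sum_eq_zero_iff.1 hm i]
  | succ m ih =>
    obtain ⟨i, -, hi⟩ := Finset.exists_ne_zero_of_sum_ne_zero (hm.trans_ne m.succ_ne_zero)
    obtain ⟨c, rfl⟩ := exists_eq_add_single hi
    refine add_single c i (ih c ?_)
    simpa [Finset.sum_add_distrib] using hm

variable {G : Type*} [CommMonoid G]

theorem prod_pow_add_single (θ : Fin n → G) (a : Fin n → ℕ) (j : Fin n) :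
    ∏ l, θ l ^ (a + δ j) l = (∏ l, θ l ^ a l) * θ j := by
  simp_rw [Pi.add_apply, pow_add, Finset.prod_mul_distrib]
  simp [Pi.single_apply]

end Exponents

section Coefficients

variable {n : ℕ} {k : Type*} [CommRing k] (q : Fin n → Fin n → kˣ)

/-- The scalar produced by moving `v i` to its place in the monomial with exponents `b`, when
multiplying that monomial by `v i` from the right. -/
def reorderCoeff (b : Fin n → ℕ) (i : Fin n) : kˣ :=
  ∏ l, (if i < l then (q i l)⁻¹ else 1) ^ b l

/-- The coefficient with which the component in direction `i` of the Koszul differential takes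
`a + δ i` to `a`; the sign and the parameters `q` make different components anticommute. -/
def koszulCoeff (a : Fin n → ℕ) (i : Fin n) : kˣ :=
  ∏ l, (if l < i then -q l i else 1) ^ a l

variable {q}

theorem reorderCoeff_add_single (b : Fin n → ℕ) (i j : Fin n) :
    reorderCoeff q (b + δ j) i =
      reorderCoeff q b i * if i < j then (q i j)⁻¹ else 1 :=
  prod_pow_add_single (fun l => if i < l then (q i l)⁻¹ else 1) b j

theorem koszulCoeff_add_single (a : Fin n → ℕ) (i j : Fin n) :
    koszulCoeff q (a + δ j) i = koszulCoeff q a i * if j < i then -q j i else 1 :=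
  prod_pow_add_single (fun l => if l < i then -q l i else 1) a j

end Coefficients

section Monomials

variable {n : ℕ} {k A : Type*} [CommRing k] [Ring A] [Algebra k A]

/-- The relations `v i * v j = q i j • (v j * v i)` for `i < j`, and `v i * v i = 0` for `i ∈ J`. -/
structure SkewRelations (J : Finset (Fin n)) (q : Fin n → Fin n → kˣ) (v : Fin n → A) : Prop where
  mul_swap : ∀ i j, i < j → v i * v j = q i j • (v j * v i)
  mul_self : ∀ i ∈ J, v i * v i = 0

/-- The ordered monomial `v 0 ^ b 0 * v 1 ^ b 1 * ⋯`. -/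
def orderedMonomial (v : Fin n → A) (b : Fin n → ℕ) : A :=
  (List.ofFn fun i => v i ^ b i).prod

/-- The exponents of the ordered monomials forming the PBW basis: those with `b i ≤ 1` for all
`i ∈ J`. -/
def pbwExponents (J : Finset (Fin n)) : Set (Fin n → ℕ) :=
  {b | ∀ i ∈ J, b i ≤ 1}

theorem orderedMonomial_zero (v : Fin n → A) : orderedMonomial v 0 = 1 :=
  List.prod_eq_one (by simp)

theorem orderedMonomial_succ (v : Fin (n + 1) → A) (b : Fin (n + 1) → ℕ) :
    orderedMonomial v b = orderedMonomial (fun i => v i.castSucc) (fun i => b i.castSucc) *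
      v (Fin.last n) ^ b (Fin.last n) := by
  rw [orderedMonomial, List.ofFn_succ', List.prod_concat]
  rfl

theorem pow_mul_of_mul_swap {x y : A} {u : kˣ} (h : x * y = u • (y * x)) (m : ℕ) :
    y ^ m * x = u⁻¹ ^ m • (x * y ^ m) := by
  induction m with
  | zero => simp
  | succ m ih =>
    have hyx : y * x = u⁻¹ • (x * y) := by rw [h, inv_smul_smul]
    rw [pow_succ, mul_assoc, hyx, mul_smul_comm, ← mul_assoc, ih, smul_mul_assoc, smul_smul,
      mul_assoc, ← pow_succ, ← pow_succ']

theorem orderedMonomial_mul {q : Fin n → Fin n → kˣ} {v : Fin n → A}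
    (hv : ∀ i j, i < j → v i * v j = q i j • (v j * v i)) (b : Fin n → ℕ) (i : Fin n) :
    orderedMonomial v b * v i = reorderCoeff q b i • orderedMonomial v (b + δ i) := by
  induction n with
  | zero => exact i.elim0
  | succ n ih =>
    rw [orderedMonomial_succ v b, orderedMonomial_succ v (b + _)]
    induction i using Fin.lastCases with
    | last =>
      have hr : reorderCoeff q b (Fin.last n) = 1 :=
        Finset.prod_eq_one fun l _ => by simp [(Fin.le_last l).not_gt]
      simp [hr, mul_assoc, pow_succ]
    | cast i =>
      have hb : (fun j : Fin n => (b + δ i.castSucc) j.castSucc) =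
          (fun j => b j.castSucc) + δ i := by
        ext j
        simp [Pi.single_apply]
      have hr : reorderCoeff q b i.castSucc =
          reorderCoeff (fun i j => q i.castSucc j.castSucc) (fun i => b i.castSucc) i *
            (q i.castSucc (Fin.last n))⁻¹ ^ b (Fin.last n) := by
        simp [reorderCoeff, Fin.prod_univ_castSucc, Fin.castSucc_lt_last]
      have ih := ih (q := fun i j => q i.castSucc j.castSucc) (v := fun i => v i.castSucc)
        (fun i j hij => hv _ _ (by simpa using hij)) (fun i => b i.castSucc) i
      rw [mul_assoc, pow_mul_of_mul_swap (hv _ _ (Fin.castSucc_lt_last i)), mul_smul_comm,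
        ← mul_assoc, ih, smul_mul_assoc, smul_smul, hb, hr, mul_comm]
      simp

variable {J : Finset (Fin n)} {q : Fin n → Fin n → kˣ} {v : Fin n → A}

theorem SkewRelations.orderedMonomial_eq_zero (hv : SkewRelations J q v) {b : Fin n → ℕ}
    (hb : b ∉ pbwExponents J) : orderedMonomial v b = 0 := by
  obtain ⟨i, hi, hbi⟩ : ∃ i ∈ J, 1 < b i := by simpa [pbwExponents] using hb
  refine List.prod_eq_zero (List.mem_ofFn.2 ⟨i, ?_⟩)
  exact pow_eq_zero_of_le hbi (by rw [sq, hv.mul_self i hi])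

end Monomials

section PBW

variable {n : ℕ} {k : Type*} [CommRing k] (J : Finset (Fin n)) (q : Fin n → Fin n → kˣ)

/-- Right multiplication by `v i` on the formal span of the exponents, as prescribed by
`orderedMonomial_mul`. -/
noncomputable def shiftOperator (i : Fin n) : Module.End k ((Fin n → ℕ) →₀ k) :=
  Finsupp.linearCombination k fun b =>
    if i ∈ J ∧ b i ≠ 0 then 0 else reorderCoeff q b i • Finsupp.single (b + δ i) 1

variable {J q}

theorem shiftOperator_single (i : Fin n) (b : Fin n → ℕ) :
    shiftOperator J q i (Finsupp.single b 1) =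
      if i ∈ J ∧ b i ≠ 0 then 0 else reorderCoeff q b i • Finsupp.single (b + δ i) 1 := by
  simp [shiftOperator]

theorem shiftOperator_mul_shiftOperator {i j : Fin n} (hij : i < j) :
    shiftOperator J q j * shiftOperator J q i =
      q i j • (shiftOperator J q i * shiftOperator J q j) := by
  refine Finsupp.lhom_ext' fun b => LinearMap.ext_ring ?_
  have hi : (b + δ j) i = b i := by simp [hij.ne]
  have hj : (b + δ i) j = b j := by simp [hij.ne']
  have hcoeff : reorderCoeff q b i * reorderCoeff q (b + δ i) j =
      q i j * (reorderCoeff q b j * reorderCoeff q (b + δ j) i) := by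
    rw [reorderCoeff_add_single, reorderCoeff_add_single, if_neg hij.not_gt, if_pos hij, mul_one,
      ← mul_assoc (reorderCoeff q b j), ← mul_assoc, mul_inv_cancel_comm, mul_comm]
  by_cases hbi : i ∈ J ∧ b i ≠ 0 <;> by_cases hbj : j ∈ J ∧ b j ≠ 0 <;>
    simp [-Finsupp.smul_single, -ne_eq, -Pi.add_apply, hi, hj, hbi, hbj, shiftOperator_single,
      LinearMap.map_smul_of_tower, smul_smul, hcoeff, add_right_comm b (δ i)]

theorem skewRelations_shiftOperator :
    SkewRelations J q fun i => MulOpposite.op (shiftOperator J q i) where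
  mul_swap i j hij := by
    rw [← MulOpposite.op_mul, shiftOperator_mul_shiftOperator hij, MulOpposite.op_smul,
      MulOpposite.op_mul]
  mul_self i hi := by
    refine MulOpposite.unop_injective ?_
    refine Finsupp.lhom_ext' fun b => LinearMap.ext_ring ?_
    by_cases hb : b i = 0 <;>
      simp [-Finsupp.smul_single, shiftOperator_single, hi, hb, LinearMap.map_smul_of_tower]

theorem orderedMonomial_shiftOperator_single_zero {b : Fin n → ℕ} (hb : b ∈ pbwExponents J) :
    (orderedMonomial (fun i => MulOpposite.op (shiftOperator J q i)) b).unop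
      (Finsupp.single 0 1) = Finsupp.single b 1 := by
  induction b using exponent_induction with
  | zero => simp [orderedMonomial_zero]
  | add_single b i ih =>
    have hb' : b ∈ pbwExponents J := fun l hl => le_trans (by simp) (hb l hl)
    have hi : ¬(i ∈ J ∧ b i ≠ 0) := fun h => by
      have := hb i h.1
      simp [h.2] at this
    have hmul := congrArg MulOpposite.unop
      (orderedMonomial_mul (skewRelations_shiftOperator (J := J) (q := q)).mul_swap b i)
    rw [← smul_left_cancel_iff (reorderCoeff q b i), ← LinearMap.smul_apply,
      ← MulOpposite.unop_smul, ← hmul, MulOpposite.unop_mul, Module.End.mul_apply, ih hb',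
      MulOpposite.unop_op, shiftOperator_single, if_neg hi]

variable {A : Type*} [Ring A] [Algebra k A] {v : Fin n → A}

theorem linearIndependent_orderedMonomial
    (φ : A →ₐ[k] (Module.End k ((Fin n → ℕ) →₀ k))ᵐᵒᵖ)
    (hφ : ∀ i, φ (v i) = MulOpposite.op (shiftOperator J q i)) :
    LinearIndependent k fun b : pbwExponents J => orderedMonomial v b := by
  have hφv (b : pbwExponents J) :
      (φ (orderedMonomial v b)).unop (Finsupp.single 0 1) = Finsupp.single (b : Fin n → ℕ) 1 := by
    rw [← orderedMonomial_shiftOperator_single_zero (q := q) b.2]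
    simp [orderedMonomial, map_list_prod, List.map_ofFn, Function.comp_def, hφ]
  let evalZero : A →ₗ[k] (Fin n → ℕ) →₀ k :=
    LinearMap.applyₗ (Finsupp.single 0 1) ∘ₗ (MulOpposite.opLinearEquiv k).symm.toLinearMap ∘ₗ
      φ.toLinearMap
  refine LinearIndependent.of_comp evalZero ?_
  convert (Finsupp.linearIndependent_single_one k (Fin n → ℕ)).comp _
    (Subtype.val_injective (p := (· ∈ pbwExponents J)))
  exact funext hφv

theorem eq_top_of_mul_mem (hv : Algebra.adjoin k (Set.range v) = ⊤) {S : Submodule k A}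
    (hone : 1 ∈ S) (hmul : ∀ x ∈ S, ∀ i, x * v i ∈ S) : S = ⊤ := by
  suffices ∀ x, ∀ y ∈ S, y * x ∈ S from
    eq_top_iff.2 fun x _ => by simpa using this x 1 hone
  intro x
  induction (hv ▸ Algebra.mem_top : x ∈ Algebra.adjoin k (Set.range v))
    using Algebra.adjoin_induction with
  | mem x hx =>
    obtain ⟨i, rfl⟩ := hx
    exact fun y hy => hmul y hy i
  | algebraMap c =>
    intro y hy
    rw [← Algebra.commutes, ← Algebra.smul_def]
    exact S.smul_mem c hy
  | add x₁ x₂ _ _ h₁ h₂ => exact fun y hy => by simpa [mul_add] using S.add_mem (h₁ y hy) (h₂ y hy)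
  | mul x₁ x₂ _ _ h₁ h₂ => exact fun y hy => by simpa [mul_assoc] using h₂ _ (h₁ y hy)

theorem SkewRelations.span_orderedMonomial (hv : SkewRelations J q v)
    (hadjoin : Algebra.adjoin k (Set.range v) = ⊤) :
    Submodule.span k (Set.range fun b : pbwExponents J => orderedMonomial v b) = ⊤ := by
  set S := Submodule.span k (Set.range fun b : pbwExponents J => orderedMonomial v b)
  have hmem (b : Fin n → ℕ) : orderedMonomial v b ∈ S := by
    by_cases hb : b ∈ pbwExponents J
    · exact Submodule.subset_span ⟨⟨b, hb⟩, rfl⟩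
    · rw [hv.orderedMonomial_eq_zero hb]
      exact S.zero_mem
  refine eq_top_of_mul_mem hadjoin (orderedMonomial_zero v ▸ hmem 0) fun x hx i => ?_
  refine (Submodule.span_le (p := S.comap (LinearMap.mulRight k (v i)))).2 ?_ hx
  rintro _ ⟨b, rfl⟩
  simpa [orderedMonomial_mul hv.mul_swap, Units.smul_def] using hmem _

end PBW

section Koszul

variable {n : ℕ} {k A : Type*} [CommRing k] [Ring A] [Algebra k A]
  {J : Finset (Fin n)} {q : Fin n → Fin n → kˣ} {v : Fin n → A}

/-- The exponents labelling the basis of the Koszul complex in degree `m`. -/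
def koszulExponents (J : Finset (Fin n)) (m : ℕ) : Set (Fin n → ℕ) :=
  {a | ∑ i, a i = m ∧ ∀ i ∉ J, a i ≤ 1}

/-- The component in direction `j` of the Koszul differential, on the free module with basis all
exponents. -/
noncomputable def koszulComponent (q : Fin n → Fin n → kˣ) (v : Fin n → A) (j : Fin n) :
    ((Fin n → ℕ) →₀ A) →ₗ[A] ((Fin n → ℕ) →₀ A) :=
  Finsupp.linearCombination A fun a =>
    if a j = 0 then 0 else koszulCoeff q (a - δ j) j • Finsupp.single (a - δ j) (v j)

theorem koszulComponent_single_of_eq_zero {a : Fin n → ℕ} {j : Fin n} (hj : a j = 0) (x : A) :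
    koszulComponent q v j (Finsupp.single a x) = 0 := by
  simp [koszulComponent, hj]

theorem koszulComponent_single_add (a : Fin n → ℕ) (j : Fin n) (x : A) :
    koszulComponent q v j (Finsupp.single (a + δ j) x) =
      koszulCoeff q a j • Finsupp.single a (x * v j) := by
  rw [koszulComponent, Finsupp.linearCombination_single, if_neg (by simp), add_tsub_cancel_right,
    smul_comm, Finsupp.smul_single, smul_eq_mul]

theorem koszulComponent_koszulComponent_of_eq_zero {a : Fin n → ℕ} {i : Fin n} (hi : a i = 0)
    (j : Fin n) (x : A) :
    koszulComponent q v i (koszulComponent q v j (Finsupp.single a x)) = 0 := by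
  by_cases hj : a j = 0
  · rw [koszulComponent_single_of_eq_zero hj, map_zero]
  obtain ⟨a, rfl⟩ := exists_eq_add_single hj
  rw [koszulComponent_single_add, LinearMap.map_smul_of_tower,
    koszulComponent_single_of_eq_zero (Nat.eq_zero_of_add_eq_zero_right hi), smul_zero]

theorem koszulComponent_anticomm (hv : SkewRelations J q v) {i j : Fin n} (hij : i ≠ j)
    (a : Fin n → ℕ) (x : A) :
    koszulComponent q v i (koszulComponent q v j (Finsupp.single a x)) +
      koszulComponent q v j (koszulComponent q v i (Finsupp.single a x)) = 0 := by
  wlog hlt : i < j generalizing i j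
  · rw [add_comm]
    exact this hij.symm (hij.lt_or_gt.resolve_left hlt)
  by_cases hi : a i = 0
  · rw [koszulComponent_koszulComponent_of_eq_zero hi, koszulComponent_single_of_eq_zero hi,
      map_zero, add_zero]
  by_cases hj : a j = 0
  · rw [koszulComponent_koszulComponent_of_eq_zero hj, koszulComponent_single_of_eq_zero hj,
      map_zero, add_zero]
  obtain ⟨a, rfl⟩ := exists_eq_add_single hi
  obtain ⟨a, rfl⟩ := exists_eq_add_single (a := a) (i := j) (by simpa [hij.symm] using hj)
  rw [koszulComponent_single_add, add_right_comm, koszulComponent_single_add,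
    LinearMap.map_smul_of_tower, LinearMap.map_smul_of_tower, koszulComponent_single_add,
    koszulComponent_single_add, koszulCoeff_add_single, koszulCoeff_add_single, if_pos hlt,
    if_neg hlt.not_gt, mul_assoc x (v i), hv.mul_swap i j hlt, mul_smul_comm, ← mul_assoc,
    ← Finsupp.smul_single, smul_smul, smul_smul, smul_smul, mul_neg, neg_mul, Units.neg_smul,
    mul_one, neg_add_eq_zero]
  congr 1
  rw [mul_right_comm, mul_comm (koszulCoeff q a j) (koszulCoeff q a i), mul_right_comm]

theorem koszulComponent_comp_self (hv : SkewRelations J q v) {m : ℕ} {a : Fin n → ℕ}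
    (ha : a ∈ koszulExponents J m) (j : Fin n) (x : A) :
    koszulComponent q v j (koszulComponent q v j (Finsupp.single a x)) = 0 := by
  by_cases haj : a j = 0
  · rw [koszulComponent_single_of_eq_zero haj, map_zero]
  obtain ⟨a, rfl⟩ := exists_eq_add_single haj
  rw [koszulComponent_single_add, LinearMap.map_smul_of_tower]
  by_cases haj : a j = 0
  · rw [koszulComponent_single_of_eq_zero haj, smul_zero]
  have hj : j ∈ J := by
    by_contra hj
    simpa [haj] using ha.2 j hj
  obtain ⟨a, rfl⟩ := exists_eq_add_single haj
  rw [koszulComponent_single_add, mul_assoc, hv.mul_self j hj, mul_zero, Finsupp.single_zero,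
    smul_zero, smul_zero]

/-- The Koszul differential, before restriction to `koszulExponents`. -/
noncomputable def koszulDifferential (q : Fin n → Fin n → kˣ) (v : Fin n → A) :
    ((Fin n → ℕ) →₀ A) →ₗ[A] ((Fin n → ℕ) →₀ A) :=
  ∑ j, koszulComponent q v j

theorem koszulDifferential_apply (x : (Fin n → ℕ) →₀ A) :
    koszulDifferential q v x = ∑ j, koszulComponent q v j x := by
  simp [koszulDifferential]

theorem supported_le_of_single_mem {ι R : Type*} [Ring R] {s : Set ι}
    {p : Submodule R (ι →₀ R)} (hp : ∀ a ∈ s, Finsupp.single a 1 ∈ p) :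
    Finsupp.supported R R s ≤ p := by
  rw [Finsupp.supported_eq_span_single, Submodule.span_le]
  rintro _ ⟨a, ha, rfl⟩
  exact hp a ha

theorem koszulDifferential_koszulDifferential (hv : SkewRelations J q v) {m : ℕ}
    {x : (Fin n → ℕ) →₀ A} (hx : x ∈ Finsupp.supported A A (koszulExponents J m)) :
    koszulDifferential q v (koszulDifferential q v x) = 0 := by
  refine (supported_le_of_single_mem
    (p := LinearMap.ker (koszulDifferential q v ∘ₗ koszulDifferential q v)) fun a ha => ?_) hx
  simp only [LinearMap.mem_ker, LinearMap.comp_apply, koszulDifferential_apply, map_sum]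
  rw [← Fintype.sum_prod_type']
  refine Finset.sum_involution (fun ij _ => ij.swap) ?_ ?_ (fun _ _ => Finset.mem_univ _)
    (fun ij _ => ij.swap_swap)
  · rintro ⟨i, j⟩ -
    obtain rfl | hij := eq_or_ne i j
    · simp [koszulComponent_comp_self hv ha]
    · exact koszulComponent_anticomm hv hij.symm a 1
  · rintro ⟨i, j⟩ - hne heq
    obtain rfl : j = i := congrArg Prod.fst heq
    exact hne (koszulComponent_comp_self hv ha j 1)

theorem mem_koszulExponents_of_add_single {m : ℕ} {a : Fin n → ℕ} {j : Fin n}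
    (ha : a + δ j ∈ koszulExponents J (m + 1)) : a ∈ koszulExponents J m := by
  refine ⟨?_, fun i hi => le_trans (by simp) (ha.2 i hi)⟩
  simpa [Finset.sum_add_distrib] using ha.1

theorem add_single_mem_koszulExponents {m : ℕ} {a : Fin n → ℕ} {i : Fin n}
    (ha : a ∈ koszulExponents J m) (hi : i ∈ J ∨ a i = 0) :
    a + δ i ∈ koszulExponents J (m + 1) := by
  refine ⟨by simp [Finset.sum_add_distrib, ha.1], fun j hj => ?_⟩
  obtain rfl | hji := eq_or_ne j i
  · simp [hi.resolve_left hj]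
  · simpa [hji] using ha.2 j hj

theorem koszulDifferential_mem_supported {m : ℕ} :
    ∀ x ∈ Finsupp.supported A A (koszulExponents J (m + 1)),
      koszulDifferential q v x ∈ Finsupp.supported A A (koszulExponents J m) := by
  refine supported_le_of_single_mem
    (p := (Finsupp.supported A A _).comap (koszulDifferential q v)) fun a ha => ?_
  rw [Submodule.mem_comap, koszulDifferential_apply]
  refine Submodule.sum_mem _ fun j _ => ?_
  by_cases hj : a j = 0
  · rw [koszulComponent_single_of_eq_zero hj]
    exact Submodule.zero_mem _
  · obtain ⟨a, rfl⟩ := exists_eq_add_single hj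
    rw [koszulComponent_single_add]
    exact Submodule.smul_of_tower_mem _ _
      (Finsupp.single_mem_supported A _ (mem_koszulExponents_of_add_single ha))

variable (q) in
/-- The coefficient with which the Koszul differential moves a factor `v i` from the exponent
`a + δ i` to the monomial with exponent `b`. -/
def pairCoeff (a b : Fin n → ℕ) (i : Fin n) : kˣ :=
  koszulCoeff q a i * reorderCoeff q b i

theorem koszulComponent_single_orderedMonomial (hv : SkewRelations J q v) (a b : Fin n → ℕ)
    (j : Fin n) :
    koszulComponent q v j (Finsupp.single (a + δ j) (orderedMonomial v b)) =
      pairCoeff q a b j • Finsupp.single a (orderedMonomial v (b + δ j)) := by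
  rw [koszulComponent_single_add, orderedMonomial_mul hv.mul_swap, ← Finsupp.smul_single,
    smul_smul, pairCoeff]

theorem koszulComponent_single_orderedMonomial_eq_zero (hv : SkewRelations J q v) {i : Fin n}
    (hi : i ∈ J) (a : Fin n → ℕ) {b : Fin n → ℕ} (hbi : b i ≠ 0) :
    koszulComponent q v i (Finsupp.single a (orderedMonomial v b)) = 0 := by
  by_cases hai : a i = 0
  · exact koszulComponent_single_of_eq_zero hai _
  obtain ⟨a, rfl⟩ := exists_eq_add_single hai
  have hb : b + δ i ∉ pbwExponents J := fun hb => hbi (by simpa using hb i hi)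
  rw [koszulComponent_single_orderedMonomial hv, hv.orderedMonomial_eq_zero hb,
    Finsupp.single_zero, smul_zero]

theorem pairCoeff_mul_pairCoeff {i j : Fin n} (hij : i ≠ j) (a b : Fin n → ℕ) :
    pairCoeff q (a + δ j) b i * pairCoeff q a (b + δ i) j =
      -(pairCoeff q (a + δ i) b j * pairCoeff q a (b + δ j) i) := by
  wlog hlt : i < j generalizing i j
  · rw [this hij.symm (hij.lt_or_gt.resolve_left hlt), neg_neg]
  have hregroup (ci cj ri rj u : kˣ) :
      cj * u * rj * (ci * (ri * u⁻¹)) = ci * ri * (cj * rj) * (u * u⁻¹) := by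
    ac_rfl
  simp only [pairCoeff, koszulCoeff_add_single, reorderCoeff_add_single, hlt, hlt.not_gt, if_true,
    if_false, mul_one, mul_neg, neg_mul, neg_neg, hregroup, mul_inv_cancel]

variable (J q v) in
/-- A PBW basis for the relations `SkewRelations J q v`. -/
structure SkewPBWBasis where
  relations : SkewRelations J q v
  basis : Module.Basis (pbwExponents J) k A
  basis_apply : ∀ b, basis b = orderedMonomial v b

namespace SkewPBWBasis

theorem mem_of_mem_supported (P : SkewPBWBasis J q v) {ι : Type*} {s : Set ι}
    {p : Submodule k (ι →₀ A)}
    (hp : ∀ a ∈ s, ∀ b ∈ pbwExponents J, Finsupp.single a (orderedMonomial v b) ∈ p)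
    {x : ι →₀ A} (hx : x ∈ Finsupp.supported A A s) : x ∈ p := by
  have hsingle (a : ι) (ha : a ∈ s) (y : A) : Finsupp.single a y ∈ p := by
    refine (Submodule.span_le (p := p.comap (Finsupp.lsingle a))).2 ?_ (P.basis.mem_span y)
    rintro _ ⟨b, rfl⟩
    rw [P.basis_apply]
    exact hp a ha b b.2
  rw [← x.sum_single]
  exact Submodule.sum_mem _ fun a ha => hsingle a (hx ha) _

variable (P : SkewPBWBasis J q v)

/-- The contracting homotopy for `koszulComponent q v i`: it moves one factor `v i` from the
monomial into the exponent. -/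
noncomputable def directionHomotopy (i : Fin n) :
    ((Fin n → ℕ) →₀ A) →ₗ[k] ((Fin n → ℕ) →₀ A) :=
  Finsupp.lsum k fun a => P.basis.constr k fun b =>
    if (i ∈ J ∨ a i = 0) ∧ b.1 i ≠ 0 then
      (pairCoeff q a (b.1 - δ i) i)⁻¹ • Finsupp.single (a + δ i) (orderedMonomial v (b.1 - δ i))
    else 0

theorem directionHomotopy_single {i : Fin n} (a : Fin n → ℕ) {b : Fin n → ℕ}
    (hb : b ∈ pbwExponents J) :
    P.directionHomotopy i (Finsupp.single a (orderedMonomial v b)) =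
      if (i ∈ J ∨ a i = 0) ∧ b i ≠ 0 then
        (pairCoeff q a (b - δ i) i)⁻¹ • Finsupp.single (a + δ i) (orderedMonomial v (b - δ i))
      else 0 := by
  rw [← P.basis_apply ⟨b, hb⟩, directionHomotopy, Finsupp.lsum_single, Module.Basis.constr_basis]

theorem directionHomotopy_single_of_eq_zero {i : Fin n} (a : Fin n → ℕ) {b : Fin n → ℕ}
    (hbi : b i = 0) : P.directionHomotopy i (Finsupp.single a (orderedMonomial v b)) = 0 := by
  by_cases hb : b ∈ pbwExponents J
  · rw [P.directionHomotopy_single a hb, if_neg (by simp [hbi])]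
  · rw [P.relations.orderedMonomial_eq_zero hb, Finsupp.single_zero, map_zero]

theorem directionHomotopy_single_of_not {i : Fin n} {a : Fin n → ℕ} (hai : ¬(i ∈ J ∨ a i = 0))
    (x : A) : P.directionHomotopy i (Finsupp.single a x) = 0 := by
  have : P.directionHomotopy i ∘ₗ Finsupp.lsingle a = 0 := P.basis.ext fun b => by
    simpa [P.basis_apply, hai] using P.directionHomotopy_single (i := i) a b.2
  exact LinearMap.congr_fun this x

theorem directionHomotopy_single_add {i : Fin n} {a b : Fin n → ℕ} (hai : i ∈ J ∨ a i = 0)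
    (hbi : i ∈ J → b i = 0) :
    P.directionHomotopy i (Finsupp.single a (orderedMonomial v (b + δ i))) =
      (pairCoeff q a b i)⁻¹ • Finsupp.single (a + δ i) (orderedMonomial v b) := by
  have hiff : b + δ i ∈ pbwExponents J ↔ b ∈ pbwExponents J := by
    refine forall₂_congr fun j hj => ?_
    obtain rfl | hji := eq_or_ne j i
    · simp [hbi hj]
    · simp [hji]
  by_cases hb : b ∈ pbwExponents J
  · rw [P.directionHomotopy_single a (hiff.2 hb), if_pos ⟨hai, by simp⟩, add_tsub_cancel_right]
  · rw [P.relations.orderedMonomial_eq_zero hb, P.relations.orderedMonomial_eq_zero (hiff.not.2 hb),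
      Finsupp.single_zero, Finsupp.single_zero, map_zero, smul_zero]

theorem directionHomotopy_anticomm {i j : Fin n} (hij : i ≠ j) (a : Fin n → ℕ) {b : Fin n → ℕ}
    (hb : b ∈ pbwExponents J) :
    koszulComponent q v j (P.directionHomotopy i (Finsupp.single a (orderedMonomial v b))) +
      P.directionHomotopy i (koszulComponent q v j (Finsupp.single a (orderedMonomial v b))) =
        0 := by
  by_cases hai : i ∈ J ∨ a i = 0
  swap
  · rw [P.directionHomotopy_single_of_not hai, map_zero, zero_add]
    by_cases haj : a j = 0
    · rw [koszulComponent_single_of_eq_zero haj, map_zero]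
    obtain ⟨a, rfl⟩ := exists_eq_add_single haj
    rw [koszulComponent_single_add, LinearMap.map_smul_of_tower,
      P.directionHomotopy_single_of_not (by simpa [hij] using hai), smul_zero]
  by_cases haj : a j = 0
  · rw [koszulComponent_single_of_eq_zero haj, map_zero, add_zero, P.directionHomotopy_single a hb]
    split_ifs
    · rw [LinearMap.map_smul_of_tower,
        koszulComponent_single_of_eq_zero (by simp [haj, hij.symm]), smul_zero]
    · exact map_zero _
  obtain ⟨a, rfl⟩ := exists_eq_add_single haj
  replace hai : i ∈ J ∨ a i = 0 := by simpa [hij] using hai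
  rw [koszulComponent_single_orderedMonomial P.relations, LinearMap.map_smul_of_tower]
  by_cases hbi : b i = 0
  · rw [P.directionHomotopy_single_of_eq_zero _ hbi,
      P.directionHomotopy_single_of_eq_zero _ (by simp [hbi, hij]), map_zero, smul_zero, add_zero]
  obtain ⟨b, rfl⟩ := exists_eq_add_single hbi
  have hbi : i ∈ J → b i = 0 := fun hi => by simpa using hb i hi
  rw [P.directionHomotopy_single_add (by simpa [hij] using hai) hbi, add_right_comm b,
    P.directionHomotopy_single_add hai (by simpa [hij] using hbi), LinearMap.map_smul_of_tower,
    add_right_comm a, koszulComponent_single_orderedMonomial P.relations, smul_smul, smul_smul,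
    ← neg_eq_iff_add_eq_zero, ← Units.neg_smul]
  congr 1
  rw [eq_mul_inv_iff_mul_eq, neg_mul, mul_assoc, ← mul_neg, inv_mul_eq_iff_eq_mul]
  exact (pairCoeff_mul_pairCoeff hij a b).symm

theorem koszulComponent_directionHomotopy {i : Fin n} {a b : Fin n → ℕ} (hai : i ∈ J ∨ a i = 0)
    (hbi : i ∈ J → b i = 0) :
    koszulComponent q v i (P.directionHomotopy i (Finsupp.single a
      (orderedMonomial v (b + δ i)))) = Finsupp.single a (orderedMonomial v (b + δ i)) := by
  rw [P.directionHomotopy_single_add hai hbi, LinearMap.map_smul_of_tower,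
    koszulComponent_single_orderedMonomial P.relations, inv_smul_smul]

theorem directionHomotopy_koszulComponent {i : Fin n} {a b : Fin n → ℕ} (hai : i ∈ J ∨ a i = 0)
    (hbi : i ∈ J → b i = 0) :
    P.directionHomotopy i (koszulComponent q v i (Finsupp.single (a + δ i)
      (orderedMonomial v b))) = Finsupp.single (a + δ i) (orderedMonomial v b) := by
  rw [koszulComponent_single_orderedMonomial P.relations, LinearMap.map_smul_of_tower,
    P.directionHomotopy_single_add hai hbi, smul_inv_smul]

theorem directionHomotopy_contracts {i : Fin n} {m : ℕ} {a b : Fin n → ℕ}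
    (ha : a ∈ koszulExponents J m) (hb : b ∈ pbwExponents J) (hi : (a + b) i ≠ 0) :
    koszulComponent q v i (P.directionHomotopy i (Finsupp.single a (orderedMonomial v b))) +
      P.directionHomotopy i (koszulComponent q v i (Finsupp.single a (orderedMonomial v b))) =
        Finsupp.single a (orderedMonomial v b) := by
  by_cases hiJ : i ∈ J
  · by_cases hbi : b i = 0
    · obtain ⟨a, rfl⟩ := exists_eq_add_single (a := a) (i := i) (by simpa [hbi] using hi)
      rw [P.directionHomotopy_single_of_eq_zero _ hbi, map_zero, zero_add,
        P.directionHomotopy_koszulComponent (.inl hiJ) fun _ => hbi]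
    · rw [koszulComponent_single_orderedMonomial_eq_zero P.relations hiJ a hbi, map_zero, add_zero]
      obtain ⟨b, rfl⟩ := exists_eq_add_single hbi
      exact P.koszulComponent_directionHomotopy (.inl hiJ) fun _ => by simpa using hb i hiJ
  · by_cases hai : a i = 0
    · obtain ⟨b, rfl⟩ := exists_eq_add_single (a := b) (i := i) (by simpa [hai] using hi)
      rw [koszulComponent_single_of_eq_zero hai, map_zero, add_zero,
        P.koszulComponent_directionHomotopy (.inr hai) (absurd · hiJ)]
    · rw [P.directionHomotopy_single_of_not (by simp [hiJ, hai]), map_zero, zero_add]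
      obtain ⟨a, rfl⟩ := exists_eq_add_single hai
      exact P.directionHomotopy_koszulComponent (.inr (by simpa using ha.2 i hiJ))
        (absurd · hiJ)

end SkewPBWBasis

end Koszul

section Homotopy

variable {n : ℕ} {k A : Type*} [CommRing k] [Ring A] [Algebra k A]
  {J : Finset (Fin n)} {q : Fin n → Fin n → kˣ} {v : Fin n → A}

namespace SkewPBWBasis

variable (P : SkewPBWBasis J q v)

theorem directionHomotopy_single_mem_supported {i : Fin n} {m : ℕ} {a b : Fin n → ℕ}
    (ha : a ∈ koszulExponents J m) (hb : b ∈ pbwExponents J) :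
    P.directionHomotopy i (Finsupp.single a (orderedMonomial v b)) ∈
      Finsupp.supported A A (koszulExponents J (m + 1)) := by
  rw [P.directionHomotopy_single a hb]
  split_ifs with h
  · exact Submodule.smul_of_tower_mem _ _
      (Finsupp.single_mem_supported A _ (add_single_mem_koszulExponents ha h.1))
  · exact Submodule.zero_mem _

/-- A direction in which the nonzero weight `w` is nonzero. -/
noncomputable def pivot {w : Fin n → ℕ} (hw : w ≠ 0) : Fin n :=
  (Function.ne_iff.1 hw).choose

theorem pivot_spec {w : Fin n → ℕ} (hw : w ≠ 0) : w (pivot hw) ≠ 0 :=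
  (Function.ne_iff.1 hw).choose_spec

open Classical in
/-- The contracting homotopy of the Koszul complex. In weight `a + b ≠ 0` it is the homotopy in
the direction of the pivot of that weight. -/
noncomputable def homotopy : ((Fin n → ℕ) →₀ A) →ₗ[k] ((Fin n → ℕ) →₀ A) :=
  Finsupp.lsum k fun a => P.basis.constr k fun b =>
    if hw : a + b.1 ≠ 0 then P.directionHomotopy (pivot hw) (Finsupp.single a (P.basis b)) else 0

theorem homotopy_single_zero : P.homotopy (Finsupp.single 0 1) = 0 := by
  have hzero : (0 : Fin n → ℕ) ∈ pbwExponents J := fun _ _ => Nat.zero_le _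
  rw [← orderedMonomial_zero v, ← P.basis_apply ⟨0, hzero⟩, homotopy, Finsupp.lsum_single,
    Module.Basis.constr_basis, dif_neg (by simp)]

theorem homotopy_single {a b w : Fin n → ℕ} (hw : w ≠ 0) (hab : a + b = w) :
    P.homotopy (Finsupp.single a (orderedMonomial v b)) =
      P.directionHomotopy (pivot hw) (Finsupp.single a (orderedMonomial v b)) := by
  subst hab
  by_cases hb : b ∈ pbwExponents J
  · rw [← P.basis_apply ⟨b, hb⟩, homotopy, Finsupp.lsum_single, Module.Basis.constr_basis,
      dif_pos hw]
  · rw [P.relations.orderedMonomial_eq_zero hb, Finsupp.single_zero, map_zero, map_zero]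

theorem homotopy_koszulComponent {a b : Fin n → ℕ} (hw : a + b ≠ 0) (j : Fin n) :
    P.homotopy (koszulComponent q v j (Finsupp.single a (orderedMonomial v b))) =
      P.directionHomotopy (pivot hw)
        (koszulComponent q v j (Finsupp.single a (orderedMonomial v b))) := by
  by_cases haj : a j = 0
  · rw [koszulComponent_single_of_eq_zero haj, map_zero, map_zero]
  obtain ⟨a, rfl⟩ := exists_eq_add_single haj
  rw [koszulComponent_single_orderedMonomial P.relations, LinearMap.map_smul_of_tower,
    LinearMap.map_smul_of_tower, P.homotopy_single hw (by abel)]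

theorem homotopy_mem_supported {m : ℕ} {x : (Fin n → ℕ) →₀ A}
    (hx : x ∈ Finsupp.supported A A (koszulExponents J m)) :
    P.homotopy x ∈ Finsupp.supported A A (koszulExponents J (m + 1)) := by
  refine P.mem_of_mem_supported (p := ((Finsupp.supported A A
    (koszulExponents J (m + 1))).restrictScalars k).comap P.homotopy) (fun a ha b hb => ?_) hx
  rw [Submodule.mem_comap, Submodule.restrictScalars_mem]
  by_cases hw : a + b = 0
  · obtain ⟨rfl, rfl⟩ : a = 0 ∧ b = 0 := by simpa using hw
    rw [orderedMonomial_zero, homotopy_single_zero]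
    exact Submodule.zero_mem _
  · rw [P.homotopy_single hw rfl]
    exact P.directionHomotopy_single_mem_supported ha hb

theorem homotopy_contracts_single {m : ℕ} {a b : Fin n → ℕ} (ha : a ∈ koszulExponents J m)
    (hb : b ∈ pbwExponents J) (hw : a + b ≠ 0) :
    koszulDifferential q v (P.homotopy (Finsupp.single a (orderedMonomial v b))) +
      P.homotopy (koszulDifferential q v (Finsupp.single a (orderedMonomial v b))) =
        Finsupp.single a (orderedMonomial v b) := by
  simp only [koszulDifferential_apply, map_sum, P.homotopy_koszulComponent hw,
    P.homotopy_single hw rfl, ← Finset.sum_add_distrib]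
  rw [Fintype.sum_eq_single (pivot hw) fun j hj => P.directionHomotopy_anticomm hj.symm a hb]
  exact P.directionHomotopy_contracts ha hb (pivot_spec hw)

end SkewPBWBasis

end Homotopy

section Augmentation

variable {n : ℕ} {k A : Type*} [CommRing k] [Ring A] [Module A k] {J : Finset (Fin n)}

variable (n k A) in
/-- The augmentation of the Koszul complex, before restriction to `koszulExponents`. -/
noncomputable def koszulAugmentation : ((Fin n → ℕ) →₀ A) →ₗ[A] k :=
  LinearMap.toSpanSingleton A k 1 ∘ₗ Finsupp.lapply 0

theorem koszulAugmentation_apply (x : (Fin n → ℕ) →₀ A) :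
    koszulAugmentation n k A x = x 0 • (1 : k) :=
  rfl

theorem koszulAugmentation_eq_zero {m : ℕ} {x : (Fin n → ℕ) →₀ A}
    (hx : x ∈ Finsupp.supported A A (koszulExponents J (m + 1))) :
    koszulAugmentation n k A x = 0 := by
  have hzero : (0 : Fin n → ℕ) ∉ koszulExponents J (m + 1) := fun h => by simpa using h.1
  rw [koszulAugmentation_apply, Finsupp.notMem_support_iff.1 fun h => hzero (hx h), zero_smul]

end Augmentation

section Resolution

variable {n : ℕ} {k A : Type*} [CommRing k] [Ring A] [Algebra k A]
  {J : Finset (Fin n)} {q : Fin n → Fin n → kˣ} {v : Fin n → A}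

theorem koszulDifferential_eq_zero {x : (Fin n → ℕ) →₀ A}
    (hx : x ∈ Finsupp.supported A A (koszulExponents J 0)) : koszulDifferential q v x = 0 := by
  refine (supported_le_of_single_mem (p := LinearMap.ker (koszulDifferential q v))
    fun a ha => ?_) hx
  rw [LinearMap.mem_ker, koszulDifferential_apply]
  exact Finset.sum_eq_zero fun j _ => koszulComponent_single_of_eq_zero
    (Finset.sum_eq_zero_iff.1 ha.1 j (Finset.mem_univ j)) 1

variable (J q v) in
/-- The differential of the Koszul complex, from degree `m + 1` to degree `m`. -/
noncomputable def koszulMap (m : ℕ) :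
    Finsupp.supported A A (koszulExponents J (m + 1)) →ₗ[A]
      Finsupp.supported A A (koszulExponents J m) :=
  (koszulDifferential q v).restrict koszulDifferential_mem_supported

variable [Module A k] [IsScalarTower k A k]

theorem comp_koszulDifferential_eq_zero (hv : ∀ i (z : k), v i • z = 0)
    (f : ((Fin n → ℕ) →₀ A) →ₗ[A] k) : f ∘ₗ koszulDifferential q v = 0 := by
  refine Finsupp.lhom_ext' fun a => LinearMap.ext_ring ?_
  simp only [LinearMap.comp_apply, Finsupp.lsingle_apply, LinearMap.zero_apply,
    koszulDifferential_apply, map_sum]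
  refine Finset.sum_eq_zero fun j _ => ?_
  by_cases haj : a j = 0
  · rw [koszulComponent_single_of_eq_zero haj, map_zero]
  obtain ⟨a, rfl⟩ := exists_eq_add_single haj
  rw [koszulComponent_single_add, LinearMap.map_smul_of_tower, one_mul, ← mul_one (v j),
    ← smul_eq_mul, ← Finsupp.smul_single, map_smul, hv, smul_zero]

theorem orderedMonomial_smul_eq_zero (hswap : ∀ i j, i < j → v i * v j = q i j • (v j * v i))
    (hv : ∀ i (z : k), v i • z = 0) {b : Fin n → ℕ} (hb : b ≠ 0) (z : k) :
    orderedMonomial v b • z = 0 := by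
  obtain ⟨i, hi⟩ := Function.ne_iff.1 hb
  obtain ⟨b, rfl⟩ := exists_eq_add_single hi
  rw [← inv_smul_smul (reorderCoeff q b i) (orderedMonomial v (b + δ i)),
    ← orderedMonomial_mul hswap, smul_assoc, mul_smul, hv, smul_zero, smul_zero]

theorem SkewPBWBasis.homotopy_contracts (P : SkewPBWBasis J q v)
    (hv : ∀ i (z : k), v i • z = 0) {m : ℕ} {x : (Fin n → ℕ) →₀ A}
    (hx : x ∈ Finsupp.supported A A (koszulExponents J m)) :
    koszulDifferential q v (P.homotopy x) + P.homotopy (koszulDifferential q v x) +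
      koszulAugmentation n k A x • Finsupp.single 0 1 = x := by
  refine P.mem_of_mem_supported (p := LinearMap.eqLocus
    ((koszulDifferential q v).restrictScalars k ∘ₗ P.homotopy +
      P.homotopy ∘ₗ (koszulDifferential q v).restrictScalars k +
      ((koszulAugmentation n k A).restrictScalars k).smulRight (Finsupp.single 0 1))
    LinearMap.id) (fun a ha b hb => ?_) hx
  change koszulDifferential q v (P.homotopy _) + P.homotopy (koszulDifferential q v _) +
    koszulAugmentation n k A _ • Finsupp.single 0 1 = Finsupp.single a (orderedMonomial v b)
  by_cases hw : a + b = 0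
  · obtain ⟨rfl, rfl⟩ : a = 0 ∧ b = 0 := by simpa using hw
    have hd : koszulDifferential q v (Finsupp.single 0 1) = 0 := by
      simp [koszulDifferential_apply, koszulComponent_single_of_eq_zero]
    rw [orderedMonomial_zero, P.homotopy_single_zero, hd, map_zero, map_zero, zero_add,
      zero_add, koszulAugmentation_apply, Finsupp.single_eq_same, one_smul, one_smul]
  · have haug : koszulAugmentation n k A (Finsupp.single a (orderedMonomial v b)) = 0 := by
      rw [koszulAugmentation_apply]
      obtain rfl | ha0 := eq_or_ne a 0
      · rw [Finsupp.single_eq_same, orderedMonomial_smul_eq_zero P.relations.mul_swap hv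
          (by simpa using hw)]
      · rw [Finsupp.single_eq_of_ne ha0.symm, zero_smul]
    rw [P.homotopy_contracts_single ha hb hw, haug, zero_smul, add_zero]

theorem SkewPBWBasis.exists_koszulDifferential_eq (P : SkewPBWBasis J q v)
    (hv : ∀ i (z : k), v i • z = 0) {m : ℕ} {x : (Fin n → ℕ) →₀ A}
    (hx : x ∈ Finsupp.supported A A (koszulExponents J m)) (hdx : koszulDifferential q v x = 0)
    (haug : koszulAugmentation n k A x = 0) :
    ∃ y ∈ Finsupp.supported A A (koszulExponents J (m + 1)), koszulDifferential q v y = x := by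
  refine ⟨P.homotopy x, P.homotopy_mem_supported hx, ?_⟩
  simpa [hdx, haug] using P.homotopy_contracts hv hx

theorem SkewPBWBasis.exact_koszulMap (P : SkewPBWBasis J q v) (hv : ∀ i (z : k), v i • z = 0)
    (m : ℕ) : Function.Exact (koszulMap J q v (m + 1)) (koszulMap J q v m) := by
  rintro ⟨x, hx⟩
  constructor
  · intro hdx
    obtain ⟨y, hy, rfl⟩ := P.exists_koszulDifferential_eq hv hx (congrArg Subtype.val hdx)
      (koszulAugmentation_eq_zero hx)
    exact ⟨⟨y, hy⟩, rfl⟩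
  · rintro ⟨y, hy⟩
    obtain rfl : koszulDifferential q v y = x := congrArg Subtype.val hy
    exact Subtype.ext (koszulDifferential_koszulDifferential P.relations y.2)

theorem SkewPBWBasis.exact_koszulAugmentation (P : SkewPBWBasis J q v)
    (hv : ∀ i (z : k), v i • z = 0) :
    Function.Exact (koszulMap J q v 0)
      (koszulAugmentation n k A ∘ₗ (Finsupp.supported A A (koszulExponents J 0)).subtype) := by
  rintro ⟨x, hx⟩
  constructor
  · intro haug
    obtain ⟨y, hy, rfl⟩ := P.exists_koszulDifferential_eq hv hx (koszulDifferential_eq_zero hx) haug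
    exact ⟨⟨y, hy⟩, rfl⟩
  · rintro ⟨y, hy⟩
    obtain rfl : koszulDifferential q v y = x := congrArg Subtype.val hy
    exact LinearMap.congr_fun (comp_koszulDifferential_eq_zero hv _) _

theorem koszulAugmentation_surjective : Function.Surjective
    (koszulAugmentation n k A ∘ₗ (Finsupp.supported A A (koszulExponents J 0)).subtype) := by
  intro z
  have hzero : (0 : Fin n → ℕ) ∈ koszulExponents J 0 := by simp [koszulExponents]
  refine ⟨⟨_, Finsupp.single_mem_supported A (algebraMap k A z) hzero⟩, ?_⟩
  simp [koszulAugmentation_apply]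

theorem comp_koszulMap_eq_zero (hv : ∀ i (z : k), v i • z = 0) (m : ℕ)
    (f : Finsupp.supported A A (koszulExponents J m) →ₗ[A] k) : f ∘ₗ koszulMap J q v m = 0 := by
  classical
  have hf : f = (f ∘ₗ Finsupp.restrictDom A A (koszulExponents J m)) ∘ₗ Submodule.subtype _ := by
    rw [LinearMap.comp_assoc, Finsupp.restrictDom_comp_subtype, LinearMap.comp_id]
  refine LinearMap.ext fun x => ?_
  rw [hf]
  exact LinearMap.congr_fun (comp_koszulDifferential_eq_zero (q := q) hv
    (f ∘ₗ Finsupp.restrictDom A A (koszulExponents J m))) x.1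

end Resolution

section Ext

universe u

variable {n : ℕ} {k A : Type u} [Field k] [Ring A] [Algebra k A]
  {J : Finset (Fin n)} {q : Fin n → Fin n → kˣ} {v : Fin n → A}
  [Module A k] [IsScalarTower k A k]

/-- `Ext^m(k, k)` over an algebra with a skew PBW basis, computed by the Koszul resolution. -/
noncomputable def SkewPBWBasis.extEquiv (P : SkewPBWBasis J q v) (hv : ∀ i (z : k), v i • z = 0)
    (m : ℕ) :
    ((Ext k (ModuleCat A) m).obj (Opposite.op (ModuleCat.of A k))).obj (ModuleCat.of A k) ≃ₗ[k]
      (koszulExponents J m → k) :=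
  extEquivOfMinimal (A := A) (M := k) (N := k) (ι := fun m => koszulExponents J m)
    (X := fun m => Finsupp.supported A A (koszulExponents J m))
    (fun m => .ofRepr (Finsupp.supportedEquivFinsupp (koszulExponents J m)))
    (P.exact_koszulMap hv) (P.exact_koszulAugmentation hv) koszulAugmentation_surjective
    (comp_koszulMap_eq_zero hv) m

end Ext

section ColorAlgebra

variable {n : ℕ} {J : Finset (Fin n)} {σ : Fin n → Fin n → ℂ} {q : Fin n → Fin n → ℂˣ}

/-- The image of the generator `v i` in `A_{J,σ}`. -/
noncomputable def colorGen (J : Finset (Fin n)) (σ : Fin n → Fin n → ℂ) (i : Fin n) :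
    RingQuot (colorRel n J σ) :=
  RingQuot.mkAlgHom ℂ (colorRel n J σ) (ι ℂ i)

theorem skewRelations_colorGen (hq : ∀ i j, i < j → σ i j = q i j) :
    SkewRelations J q (colorGen J σ) where
  mul_swap i j hij := by
    rw [colorGen, colorGen, ← map_mul,
      RingQuot.mkAlgHom_rel ℂ (s := colorRel n J σ) (Or.inl ⟨i, j, hij, rfl, rfl⟩), map_smul,
      map_mul, hq i j hij, Units.smul_def]
  mul_self i hi := by
    rw [colorGen, ← map_mul,
      RingQuot.mkAlgHom_rel ℂ (s := colorRel n J σ) (Or.inr ⟨i, hi, rfl, rfl⟩), map_zero]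

theorem adjoin_colorGen : Algebra.adjoin ℂ (Set.range (colorGen J σ)) = ⊤ := by
  have hrange : Set.range (colorGen J σ) =
      RingQuot.mkAlgHom ℂ (colorRel n J σ) '' Set.range (ι ℂ) := by
    rw [← Set.range_comp]
    rfl
  rw [hrange, ← AlgHom.map_adjoin, FreeAlgebra.adjoin_range_ι, Algebra.map_top,
    AlgHom.range_eq_top]
  exact RingQuot.mkAlgHom_surjective ℂ _

theorem exists_algHom_colorGen {B : Type*} [Ring B] [Algebra ℂ B] {w : Fin n → B}
    (hq : ∀ i j, i < j → σ i j = q i j) (hw : SkewRelations J q w) :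
    ∃ φ : RingQuot (colorRel n J σ) →ₐ[ℂ] B, ∀ i, φ (colorGen J σ i) = w i := by
  have hrel : ∀ ⦃x y⦄, colorRel n J σ x y → FreeAlgebra.lift ℂ w x = FreeAlgebra.lift ℂ w y := by
    rintro _ _ (⟨i, j, hij, rfl, rfl⟩ | ⟨i, hi, rfl, rfl⟩)
    · simp [hw.mul_swap i j hij, hq i j hij, Units.smul_def]
    · simp [hw.mul_self i hi]
  exact ⟨RingQuot.liftAlgHom ℂ ⟨FreeAlgebra.lift ℂ w, hrel⟩, fun i => by simp [colorGen]⟩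

theorem linearIndependent_orderedMonomial_colorGen (hq : ∀ i j, i < j → σ i j = q i j) :
    LinearIndependent ℂ fun b : pbwExponents J => orderedMonomial (colorGen J σ) b :=
  have ⟨φ, hφ⟩ := exists_algHom_colorGen hq skewRelations_shiftOperator
  linearIndependent_orderedMonomial φ hφ

/-- The PBW basis of `A_{J,σ}` for nonzero `σ`. -/
noncomputable def colorPBWBasis (hq : ∀ i j, i < j → σ i j = q i j) :
    SkewPBWBasis J q (colorGen J σ) where
  relations := skewRelations_colorGen hq
  basis := .mk (linearIndependent_orderedMonomial_colorGen hq)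
    ((skewRelations_colorGen hq).span_orderedMonomial adjoin_colorGen).ge
  basis_apply b := Module.Basis.mk_apply _ _ b

/-- `Ext^m` over `A_{J,σ}` for nonzero `σ`, computed by the Koszul resolution. -/
noncomputable def extCEquiv (hσ : ∀ i j, i < j → σ i j ≠ 0)
    {ε : RingQuot (colorRel n J σ) →ₐ[ℂ] ℂ} (hε : ∀ i, ε (colorGen J σ i) = 0) (m : ℕ) :
    extC (RingQuot (colorRel n J σ)) ε m ≃ₗ[ℂ] (koszulExponents J m → ℂ) :=
  letI : Module (RingQuot (colorRel n J σ)) ℂ := Module.compHom ℂ ε.toRingHom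
  haveI : IsScalarTower ℂ (RingQuot (colorRel n J σ)) ℂ :=
    ⟨fun c x z => by
      change ε (c • x) * z = c * (ε x * z)
      rw [map_smul, smul_eq_mul, mul_assoc]⟩
  have hv (i : Fin n) (z : ℂ) : colorGen J σ i • z = 0 := by
    change ε (colorGen J σ i) * z = 0
    rw [hε, zero_mul]
  (colorPBWBasis (q := fun i j => if h : i < j then Units.mk0 (σ i j) (hσ i j h) else 1)
    fun i j hij => by simp [hij]).extEquiv hv m

end ColorAlgebra

section Counting

theorem prod_mk_indicator {ι R : Type*} [Fintype ι] [CommSemiring R]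
    (p : ι → ℕ → Prop) [∀ i, DecidablePred (p i)] :
    ∏ i, PowerSeries.mk (fun l => if p i l then (1 : R) else 0) =
      PowerSeries.mk fun m => (Nat.card {a : ι → ℕ | ∑ i, a i = m ∧ ∀ i, p i (a i)} : R) := by
  classical
  ext m
  simp only [PowerSeries.coeff_mk, PowerSeries.coeff_prod, Finset.prod_ite_zero,
    Finset.prod_const_one, Finset.mem_univ, true_imp_iff]
  rw [Finset.sum_boole, ← Finset.card_map Finsupp.equivFunOnFinite.toEmbedding]
  congr 1
  refine (Nat.subtype_card _ fun a => ?_).symm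
  simp only [Finset.mem_map_equiv, Finset.mem_filter, Finset.mem_finsuppAntidiag,
    Finset.subset_univ, and_true, Finsupp.equivFunOnFinite_symm_apply_apply, Set.mem_ofPred_eq]

theorem mk_indicator_le_one {R : Type*} [CommSemiring R] :
    PowerSeries.mk (fun l => if l ≤ 1 then (1 : R) else 0) = 1 + PowerSeries.X := by
  ext (_ | _ | l) <;> simp [PowerSeries.coeff_one, PowerSeries.coeff_X]

variable {n : ℕ} (J : Finset (Fin n))

theorem mk_card_koszulExponents_mul {R : Type*} [CommRing R] :
    (PowerSeries.mk fun m => (Nat.card (koszulExponents J m) : R)) * (1 - PowerSeries.X) ^ J.card =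
      (1 + PowerSeries.X) ^ (n - J.card) := by
  have hfactor (i : Fin n) : PowerSeries.mk (fun l => if i ∉ J → l ≤ 1 then (1 : R) else 0) =
      if i ∈ J then PowerSeries.mk 1 else 1 + PowerSeries.X := by
    split_ifs with hi
    · simp [hi, Pi.one_def]
    · simp [hi, mk_indicator_le_one]
  have hcompl : (1 + PowerSeries.X : PowerSeries R) ^ (n - J.card) =
      ∏ i ∈ Jᶜ, (1 + PowerSeries.X) := by
    rw [Finset.prod_const, Finset.card_compl, Fintype.card_fin]
  unfold koszulExponents
  rw [← prod_mk_indicator fun i l => i ∉ J → l ≤ 1, Finset.prod_congr rfl fun i _ => hfactor i,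
    ← Finset.prod_mul_prod_compl J, hcompl, mul_right_comm, ← Finset.prod_const,
    ← Finset.prod_mul_distrib, Finset.prod_eq_one fun i hi => ?_, one_mul]
  · exact Finset.prod_congr rfl fun i hi => if_neg (Finset.mem_compl.1 hi)
  · rw [if_pos hi, PowerSeries.mk_one_mul_one_sub_eq_one]

instance finite_koszulExponents (m : ℕ) : Finite (koszulExponents J m) :=
  (Set.finite_Iic (fun _ => m)).subset fun _ ha i =>
    (Finset.single_le_sum (fun _ _ => Nat.zero_le _) (Finset.mem_univ i)).trans_eq ha.1

theorem finite_sigma_koszulExponents : Finite (Σ m, koszulExponents J m) ↔ J = ∅ := by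
  constructor
  · intro hfin
    by_contra! hJ
    obtain ⟨i, hi⟩ := hJ
    have hmem (m : ℕ) : Pi.single i m ∈ koszulExponents J m :=
      ⟨by simp, fun j hj => by simp [ne_of_mem_of_not_mem hi hj |>.symm]⟩
    exact not_injective_infinite_finite
      (fun m => (⟨m, _, hmem m⟩ : Σ m, koszulExponents J m)) fun _ _ h => congrArg Sigma.fst h
  · rintro rfl
    let f : (Σ m, koszulExponents (∅ : Finset (Fin n)) m) → Fin n → Fin 2 :=
      fun a i => ⟨a.2.1 i, Nat.lt_succ_of_le (a.2.2.2 i (by simp))⟩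
    refine Finite.of_injective f ?_
    rintro ⟨m, a, ha⟩ ⟨l, b, hb⟩ h
    obtain rfl : a = b := funext fun i => congrArg Fin.val (congrFun h i)
    obtain rfl : m = l := ha.1.symm.trans hb.1
    rfl

theorem finiteDimensional_directSum_iff {k ι : Type*} [Field k] {V : ι → Type*}
    [∀ m, AddCommGroup (V m)] [∀ m, Module k (V m)] {s : ι → Type*} [∀ m, Finite (s m)]
    (e : ∀ m, V m ≃ₗ[k] (s m → k)) : FiniteDimensional k (⨁ m, V m) ↔ Finite (Σ m, s m) := by
  classical
  let b : Module.Basis (Σ m, s m) k (⨁ m, V m) :=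
    .ofRepr (DFinsupp.mapRange.linearEquiv (fun m =>
      e m ≪≫ₗ (Finsupp.linearEquivFunOnFinite k k (s m)).symm) ≪≫ₗ
        (sigmaFinsuppLequivDFinsupp k).symm)
  exact ⟨fun _ => Module.Finite.finite_basis b, fun _ => .of_basis b⟩

end Counting

theorem colorAlgebra_ext_dims_general (n : ℕ) (J : Finset (Fin n))
    (σ : Fin n → Fin n → ℂ) (hσ : ∀ i j : Fin n, i < j → σ i j ≠ 0)
    (ε : RingQuot (colorRel n J σ) →ₐ[ℂ] ℂ)
    (hε : ∀ i : Fin n, ε (RingQuot.mkAlgHom ℂ (colorRel n J σ) (ι ℂ i)) = 0) :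
    (∀ m : ℕ, extDim (RingQuot (colorRel n J σ)) ε m =
        Nat.card {a : Fin n → ℕ | (∑ i, a i) = m ∧ ∀ i ∉ J, a i ≤ 1}) ∧
    (PowerSeries.mk fun m => (extDim (RingQuot (colorRel n J σ)) ε m : ℚ)) *
        (1 - PowerSeries.X) ^ (J.card : ℕ) = (1 + PowerSeries.X) ^ (n - J.card) ∧
    (FiniteDimensional ℂ (⨁ m : ℕ, extC (RingQuot (colorRel n J σ)) ε m) ↔ J = ∅) := by
  have hdim (m : ℕ) : extDim (RingQuot (colorRel n J σ)) ε m = Nat.card (koszulExponents J m) := by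
    have := Fintype.ofFinite (koszulExponents J m)
    rw [extDim, (extCEquiv hσ hε m).finrank_eq, Module.finrank_fintype_fun_eq_card,
      Nat.card_eq_fintype_card]
  refine ⟨hdim, ?_, ?_⟩
  · simp only [hdim]
    exact mk_card_koszulExponents_mul J
  · rw [finiteDimensional_directSum_iff (extCEquiv hσ hε), finite_sigma_koszulExponents]

/-- `dim_ℂ Ext^m_{A_{J,σ}}(ℂ,ℂ)` equals the number of `a : Fin n → ℕ` with `∑ a_i = m` and
`a_i ≤ 1` for `i ∉ J`; equivalently the Poincaré series is `(1+z)^{n-q}/(1-z)^q`, `q = |J|`.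
In particular `⊕_m Ext^m` is finite-dimensional iff `J = ∅`. -/
theorem colorAlgebra_ext_dims (n : ℕ) (hn : 1 ≤ n) (J : Finset (Fin n))
    (σ : Fin n → Fin n → ℂ) (hσ : ∀ i j : Fin n, σ i j = 1 ∨ σ i j = -1)
    (ε : RingQuot (colorRel n J σ) →ₐ[ℂ] ℂ)
    (hε : ∀ i : Fin n, ε (RingQuot.mkAlgHom ℂ (colorRel n J σ) (ι ℂ i)) = 0) :
    (∀ m : ℕ, extDim (RingQuot (colorRel n J σ)) ε m =
        Nat.card {a : Fin n → ℕ | (∑ i, a i) = m ∧ ∀ i ∉ J, a i ≤ 1}) ∧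
    (PowerSeries.mk fun m => (extDim (RingQuot (colorRel n J σ)) ε m : ℚ)) *
        (1 - PowerSeries.X) ^ (J.card : ℕ) = (1 + PowerSeries.X) ^ (n - J.card) ∧
    (FiniteDimensional ℂ (⨁ m : ℕ, extC (RingQuot (colorRel n J σ)) ε m) ↔ J = ∅) :=
  colorAlgebra_ext_dims_general n J σ
    (fun i j _ => by rcases hσ i j with h | h <;> simp [h]) ε hε
end

section
/- Let μ ∈ ℂ with μ ≠ 0, and let R be the quotient of ℂ⟨e1,e2,e3⟩ by the two-sided ideal generated by e1e2 − e2e1 − μe2, e1e3 − e3e1 − e3, and e2e3 + e3e2. If μ ≠ −1, then h_0 = h_1 = 1 and h_n = 0 for all n ≥ 2. If μ = −1, then h_0 = h_1 = h_2 = h_3 = 1 and h_n = 0 for all n ≥ 4. -/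
open CategoryTheory FreeAlgebra

/-- Relations: `e1e2 - e2e1 = μe2`, `e1e3 - e3e1 = e3`, `e2e3 + e3e2 = 0`. -/
inductive CRel (μ : ℂ) : FreeAlgebra ℂ (Fin 3) → FreeAlgebra ℂ (Fin 3) → Prop
  | r12 : CRel μ (ι ℂ 0 * ι ℂ 1 - ι ℂ 1 * ι ℂ 0) (μ • ι ℂ 1)
  | r13 : CRel μ (ι ℂ 0 * ι ℂ 2 - ι ℂ 2 * ι ℂ 0) (ι ℂ 2)
  | r23 : CRel μ (ι ℂ 1 * ι ℂ 2 + ι ℂ 2 * ι ℂ 1) 0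

/-!
Write `x, y, z` for the generators, so that `x` acts on `y` and `z` with weights `α = μ` and
`β = 1`, and `z * y = q • (y * z)` with `q = -1`. The PBW monomials `x ^ i * y ^ a * z ^ b` form a
basis of `R`: they span because the relations reorder every word, and they are independent because
right multiplication is realised on the space of formal sums of monomials. In this basis `z, y, x`
is visibly a regular sequence for right multiplication, hence the deformed Koszul complex
`0 → R → R ^ 3 → R ^ 3 → R` resolves the trivial module. Applying `Hom_R(-, K)` kills `x, y, z` and
leaves only the weights: the three differentials become matrices of rank `0`, `2` and `1`, the last
one dropping to rank `0` exactly when `α + β = 0`.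
-/

open Polynomial

universe u v

/-! ### Ext from a resolution by free modules -/

section HomologicalAlgebra

theorem finrank_homology_add_finrank_range {K : Type u} [DivisionRing K]
    (S : ShortComplex (ModuleCat.{v} K)) [Module.Finite K S.X₂] :
    Module.finrank K S.homology + Module.finrank K (LinearMap.range S.g.hom)
      + Module.finrank K (LinearMap.range S.f.hom) = Module.finrank K S.X₂ := by
  have homology_eq : Module.finrank K S.homology =
      Module.finrank K (LinearMap.ker S.g.hom ⧸ LinearMap.range S.moduleCatToCycles) :=
    S.moduleCatHomologyIso.toLinearEquiv.finrank_eq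
  have boundaries_eq : Module.finrank K (LinearMap.range S.moduleCatToCycles) =
      Module.finrank K (LinearMap.range S.f.hom) := by
    have map_subtype : (LinearMap.range S.moduleCatToCycles).map
        (LinearMap.ker S.g.hom).subtype = LinearMap.range S.f.hom :=
      (LinearMap.range_comp _ _).symm
    rw [← map_subtype, Submodule.finrank_map_subtype_eq]
  have := (LinearMap.range S.moduleCatToCycles).finrank_quotient_add_finrank
  have := S.g.hom.finrank_range_add_finrank_ker
  lia

theorem finrank_homology_add_finrank_range_d {K : Type u} [DivisionRing K] {ι : Type*}
    {c : ComplexShape ι} (C : HomologicalComplex (ModuleCat.{v} K) c) {i j k : ι}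
    (hi : c.prev j = i) (hk : c.next j = k) [Module.Finite K (C.X j)] :
    Module.finrank K (C.homology j) + Module.finrank K (LinearMap.range (C.d j k).hom)
      + Module.finrank K (LinearMap.range (C.d i j).hom) = Module.finrank K (C.X j) := by
  have : Module.Finite K (C.sc' i j k).X₂ := ‹Module.Finite K (C.X j)›
  have homology_eq : Module.finrank K (C.homology j) = Module.finrank K (C.sc' i j k).homology :=
    (ShortComplex.homologyMapIso (C.isoSc' i j k hi hk)).toLinearEquiv.finrank_eq
  rw [homology_eq]
  exact finrank_homology_add_finrank_range (C.sc' i j k)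

theorem quasiIso_toSingle₀ {A : Type u} [Category.{v} A] [Abelian A] {P : ChainComplex A ℕ}
    {Z : A} {f : P.X 0 ⟶ Z} (hf : P.d 1 0 ≫ f = 0) (exact_zero : (ShortComplex.mk _ _ hf).Exact)
    [Epi f] (exact_succ : ∀ n, P.ExactAt (n + 1)) :
    QuasiIso ((ChainComplex.toSingle₀Equiv P Z).symm ⟨f, hf⟩) where
  quasiIsoAt
    | 0 => by
      rw [ChainComplex.quasiIsoAt₀_iff, ShortComplex.quasiIso_iff_of_zeros']
      · refine (ShortComplex.exact_and_epi_g_iff_of_iso ?_).2 ⟨exact_zero, ‹Epi f›⟩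
        refine ShortComplex.isoMk (Iso.refl _) (Iso.refl _) (Iso.refl _) ?_ ?_
        · exact (Category.id_comp _).trans (Category.comp_id _).symm
        · exact (Category.id_comp _).trans ((Category.comp_id _).trans
            (ChainComplex.toSingle₀Equiv_symm_apply_f_zero f hf)).symm
      · exact P.shape _ _ (by simp)
      · rfl
      · rfl
    | n + 1 => by
      rw [quasiIsoAt_iff_exactAt' _ _ (ChainComplex.exactAt_succ_single_obj _ _)]
      exact exact_succ n

end HomologicalAlgebra

/-- A resolution `⋯ → R ^ rank 1 → R ^ rank 0 → M → 0` of a left module by free modules of finite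
rank. The differentials act on row vectors by right multiplication with matrices, which is what
makes them left `R`-linear. -/
structure MatrixResolution (R : Type u) [Ring R] (M : Type v) [AddCommGroup M] [Module R M] where
  rank : ℕ → ℕ
  d : ∀ n, Matrix (Fin (rank (n + 1))) (Fin (rank n)) R
  exact_succ : ∀ n, Function.Exact (d (n + 1)).vecMulLinear (d n).vecMulLinear
  π : (Fin (rank 0) → R) →ₗ[R] M
  π_surjective : Function.Surjective π
  exact_zero : Function.Exact (d 0).vecMulLinear π

namespace MatrixResolution

variable {R : Type u} [Ring R] {M : Type u} [AddCommGroup M] [Module R M]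
  (F : MatrixResolution R M)

/-- The chain complex of free modules underlying a matrix resolution. -/
noncomputable def complex : ChainComplex (ModuleCat.{u} R) ℕ :=
  ChainComplex.of (fun n ↦ ModuleCat.of R (Fin (F.rank n) → R))
    (fun n ↦ ModuleCat.ofHom (F.d n).vecMulLinear)
    (fun n ↦ ModuleCat.hom_ext (F.exact_succ n).linearMap_comp_eq_zero)

theorem complex_d (n : ℕ) :
    F.complex.d (n + 1) n = ModuleCat.ofHom (F.d n).vecMulLinear := by
  simp only [complex, ChainComplex.of_d]

theorem complex_d_comp_π : F.complex.d 1 0 ≫ ModuleCat.ofHom F.π = 0 := by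
  rw [complex_d]
  exact ModuleCat.hom_ext F.exact_zero.linearMap_comp_eq_zero

theorem exactAt_complex_succ (n : ℕ) : F.complex.ExactAt (n + 1) := by
  rw [HomologicalComplex.exactAt_iff' _ (n + 2) (n + 1) n (by simp) (by simp),
    ShortComplex.ShortExact.moduleCat_exact_iff_function_exact]
  change Function.Exact (F.complex.d (n + 2) (n + 1)) (F.complex.d (n + 1) n)
  rw [complex_d, complex_d]
  exact F.exact_succ n

theorem exact_complex_d_π :
    (ShortComplex.mk _ _ F.complex_d_comp_π).Exact := by
  rw [ShortComplex.ShortExact.moduleCat_exact_iff_function_exact]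
  change Function.Exact (F.complex.d 1 0) F.π
  rw [complex_d]
  exact F.exact_zero

/-- A matrix resolution as a projective resolution in the category of modules. -/
noncomputable def toProjectiveResolution : ProjectiveResolution (ModuleCat.of R M) where
  complex := F.complex
  projective n := ModuleCat.projective_of_free (Pi.basisFun R (Fin (F.rank n)))
  π := (ChainComplex.toSingle₀Equiv _ _).symm ⟨ModuleCat.ofHom F.π, F.complex_d_comp_π⟩
  quasiIso :=
    have : Epi (X := F.complex.X 0) (ModuleCat.ofHom F.π) :=
      (ModuleCat.epi_iff_surjective _).2 F.π_surjective
    quasiIso_toSingle₀ F.complex_d_comp_π F.exact_complex_d_π F.exactAt_complex_succ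

end MatrixResolution

section TrivialModule

open scoped ModuleCat

variable {K R : Type u} [Field K] [Ring R] [Algebra K R]

/-- The field `K`, as a left `R`-module through the augmentation `ε`. -/
noncomputable def trivialModule (ε : R →ₐ[K] K) : ModuleCat.{u} R :=
  letI : Module R K := Module.compHom K ε.toRingHom
  ModuleCat.of R K

/-- `dim_K Ext^n_R(K, K)`, where `K` is an `R`-module through the augmentation `ε`. -/
noncomputable def bettiNumber (ε : R →ₐ[K] K) (n : ℕ) : ℕ :=
  Module.finrank K (((Ext K (ModuleCat R) n).obj (.op (trivialModule ε))).obj (trivialModule ε))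

variable (ε : R →ₐ[K] K)

/-- The identity map, with the `K`-module structure on the trivial module restricted from `R`. -/
noncomputable def trivialModuleEquiv : trivialModule ε ≃ₗ[K] K where
  toAddEquiv := AddEquiv.refl K
  map_smul' c t := congrArg (fun a : K ↦ a * (show K from t)) (ε.commutes c)

theorem trivialModuleEquiv_smul (r : R) (t : trivialModule ε) :
    trivialModuleEquiv ε (r • t) = ε r * trivialModuleEquiv ε t :=
  rfl

/-- A homomorphism from a free module to the trivial module is determined by the images of the
basis vectors. -/
noncomputable def homTrivialEquiv (ι : Type) [Fintype ι] [DecidableEq ι] :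
    (ModuleCat.of R (ι → R) ⟶ trivialModule ε) ≃ₗ[K] (ι → K) :=
  ModuleCat.homLinearEquiv ≪≫ₗ ((Pi.basisFun R ι).constr K).symm ≪≫ₗ
    LinearEquiv.piCongrRight fun _ ↦ trivialModuleEquiv ε

theorem homTrivialEquiv_apply {ι : Type} [Fintype ι] [DecidableEq ι]
    (f : ModuleCat.of R (ι → R) ⟶ trivialModule ε) (i : ι) :
    homTrivialEquiv ε ι f i = trivialModuleEquiv ε (f.hom (Pi.single i 1)) :=
  congrArg (trivialModuleEquiv ε ∘ f.hom) (Pi.basisFun_apply R ι i)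

theorem homTrivialEquiv_comp {ι κ : Type} [Fintype ι] [DecidableEq ι] [Fintype κ] [DecidableEq κ]
    (M : Matrix κ ι R) (f : ModuleCat.of R (ι → R) ⟶ trivialModule ε) :
    homTrivialEquiv ε κ (ModuleCat.ofHom M.vecMulLinear ≫ f) =
      (M.map ε).mulVec (homTrivialEquiv ε ι f) := by
  ext i
  simp only [homTrivialEquiv_apply, Matrix.mulVec, dotProduct, Matrix.map_apply,
    ← trivialModuleEquiv_smul, ← map_sum, ← map_smul, ModuleCat.hom_comp, ModuleCat.hom_ofHom,
    LinearMap.comp_apply, Matrix.vecMulLinear_apply, Matrix.single_one_vecMul]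
  exact congrArg (trivialModuleEquiv ε ∘ f.hom) (pi_eq_sum_univ' (M i))

theorem finrank_range_leftComp {ι κ : Type} [Fintype ι] [Fintype κ] (M : Matrix κ ι R) :
    Module.finrank K (LinearMap.range
      (Linear.leftComp K (trivialModule ε) (ModuleCat.ofHom M.vecMulLinear))) =
      (M.map ε).rank := by
  classical
  have conj : (homTrivialEquiv ε κ).toLinearMap ∘ₗ
      Linear.leftComp K (trivialModule ε) (ModuleCat.ofHom M.vecMulLinear) =
      (M.map ε).mulVecLin ∘ₗ (homTrivialEquiv ε ι).toLinearMap :=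
    LinearMap.ext (homTrivialEquiv_comp ε M)
  rw [← LinearEquiv.finrank_map_eq (homTrivialEquiv ε κ), ← LinearMap.range_comp, conj,
    LinearMap.range_comp, LinearEquiv.range, Submodule.map_top, Matrix.rank]

end TrivialModule

namespace MatrixResolution

variable {K R : Type u} [Field K] [Ring R] [Algebra K R] {ε : R →ₐ[K] K}
  (F : MatrixResolution R (trivialModule ε))

theorem bettiNumber_eq_finrank_homology (n : ℕ) :
    bettiNumber ε n =
      Module.finrank K ((F.complex.linearYonedaObj K (trivialModule ε)).homology n) :=
  (F.toProjectiveResolution.isoExt (R := K) n (trivialModule ε)).toLinearEquiv.finrank_eq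

theorem finrank_range_linearYonedaObj_d (n : ℕ) :
    Module.finrank K (LinearMap.range
      ((F.complex.linearYonedaObj K (trivialModule ε)).d n (n + 1)).hom) =
      ((F.d n).map ε).rank := by
  rw [ChainComplex.linearYonedaObj_d, complex_d]
  exact finrank_range_leftComp ε (F.d n)

theorem finrank_linearYonedaObj_X (n : ℕ) :
    Module.finrank K ((F.complex.linearYonedaObj K (trivialModule ε)).X n) = F.rank n := by
  rw [← Module.finrank_fin_fun K (n := F.rank n)]
  exact (homTrivialEquiv ε (Fin (F.rank n))).finrank_eq

instance finite_linearYonedaObj_X (n : ℕ) :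
    Module.Finite K ((F.complex.linearYonedaObj K (trivialModule ε)).X n) :=
  Module.Finite.equiv (homTrivialEquiv ε (Fin (F.rank n))).symm

theorem bettiNumber_zero_add_rank :
    bettiNumber ε 0 + ((F.d 0).map ε).rank = F.rank 0 := by
  have h := finrank_homology_add_finrank_range_d
    (F.complex.linearYonedaObj K (trivialModule ε)) (i := 0) (j := 0) (k := 1) (by simp) (by simp)
  rwa [← bettiNumber_eq_finrank_homology, finrank_range_linearYonedaObj_d,
    finrank_linearYonedaObj_X, HomologicalComplex.shape _ 0 0 (by simp), ModuleCat.hom_zero,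
    LinearMap.range_zero, finrank_bot, add_zero] at h

theorem bettiNumber_succ_add_rank_add_rank (n : ℕ) :
    bettiNumber ε (n + 1) + ((F.d (n + 1)).map ε).rank + ((F.d n).map ε).rank =
      F.rank (n + 1) := by
  rw [F.bettiNumber_eq_finrank_homology, ← finrank_range_linearYonedaObj_d,
    ← finrank_range_linearYonedaObj_d, ← finrank_linearYonedaObj_X]
  exact finrank_homology_add_finrank_range_d _ (by simp) (by simp)

end MatrixResolution

/-! ### The Koszul resolution -/

section Koszul

theorem exact_zero_vecMulLinear {R ι κ m : Type*} [Ring R] [Fintype ι] [Fintype κ]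
    {M : Matrix κ m R} (hM : Function.Injective M.vecMulLinear) :
    Function.Exact (0 : Matrix ι κ R).vecMulLinear M.vecMulLinear := fun v ↦ by
  rw [map_eq_zero_iff _ hM]
  simp [eq_comm]

variable {K R : Type*} [CommRing K] [Ring R] [Algebra K R] {α β q : K} {x y z : R}

/-- The defining relations of the family of algebras to which the theorem belongs: `x` acts on `y`
and `z` with weights `α` and `β`, and `y`, `z` commute up to the factor `q`. The relations are
written as rewriting rules that move `x` to the left and `z` to the right. -/
structure IsSkewTriple (α β q : K) (x y z : R) : Prop where
  y_mul_x : y * x = x * y - α • y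
  z_mul_x : z * x = x * z - β • z
  z_mul_y : z * y = q • (y * z)

/-- `z`, `y`, `x` is a regular sequence for right multiplication: `z` is regular on `R`, `y` on
`R ⧸ Rz` and `x` on `R ⧸ (Ry + Rz)`. -/
structure IsRightRegularTriple (x y z : R) : Prop where
  isRightRegular_z : IsRightRegular z
  exists_eq_mul_z : ∀ {r s : R}, r * y = s * z → ∃ t, r = t * z
  exists_eq_mul_y_add_mul_z : ∀ {r s t : R}, r * x = s * y + t * z →
    ∃ s' t', r = s' * y + t' * z

/-- The differential `R ^ 3 → R` of the Koszul complex. -/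
def koszulD₁ (x y z : R) : Matrix (Fin 3) (Fin 1) R :=
  !![x; y; z]

/-- The differential `R ^ 3 → R ^ 3` of the Koszul complex: its rows express the relations between
`x`, `y` and `z` as left linear syzygies. -/
def koszulD₂ (α β q : K) (x y z : R) : Matrix (Fin 3) (Fin 3) R :=
  !![-y, x - algebraMap K R α, 0; -z, 0, x - algebraMap K R β; 0, z, -(q • y)]

/-- The differential `R → R ^ 3` of the Koszul complex. -/
def koszulD₃ (α β q : K) (x y z : R) : Matrix (Fin 1) (Fin 3) R :=
  !![z, -(q • y), algebraMap K R (α + β) - x]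

theorem vecMul_koszulD₁ (v : Fin 3 → R) :
    Matrix.vecMul v (koszulD₁ x y z) = ![v 0 * x + v 1 * y + v 2 * z] := by
  ext i
  fin_cases i
  simp [koszulD₁, Matrix.vecMul, dotProduct, Fin.sum_univ_three]

theorem vecMul_koszulD₂ (v : Fin 3 → R) :
    Matrix.vecMul v (koszulD₂ α β q x y z) =
      ![-(v 0 * y + v 1 * z), v 0 * x - α • v 0 + v 2 * z, v 1 * x - β • v 1 - q • (v 2 * y)] := by
  ext i
  fin_cases i <;>
    simp [koszulD₂, Matrix.vecMul, dotProduct, Fin.sum_univ_three, Algebra.algebraMap_eq_smul_one,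
      mul_sub] <;> abel

theorem vecMul_koszulD₃ (v : Fin 1 → R) :
    Matrix.vecMul v (koszulD₃ α β q x y z) =
      ![v 0 * z, -(q • (v 0 * y)), (α + β) • v 0 - v 0 * x] := by
  ext i
  fin_cases i <;>
    simp [koszulD₃, Matrix.vecMul, dotProduct, Algebra.algebraMap_eq_smul_one, mul_sub, mul_add,
      add_smul]

namespace IsSkewTriple

theorem koszulD₂_mul_koszulD₁ (h : IsSkewTriple α β q x y z) :
    koszulD₂ α β q x y z * koszulD₁ x y z = 0 := by
  ext i j
  fin_cases j
  fin_cases i <;>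
    simp [koszulD₂, koszulD₁, Matrix.mul_apply, Fin.sum_univ_three, sub_mul,
      Algebra.algebraMap_eq_smul_one, h.y_mul_x, h.z_mul_x, h.z_mul_y]

theorem koszulD₃_mul_koszulD₂ (h : IsSkewTriple α β q x y z) :
    koszulD₃ α β q x y z * koszulD₂ α β q x y z = 0 := by
  ext i j
  fin_cases i
  fin_cases j <;>
    simp only [koszulD₃, koszulD₂, Matrix.mul_apply, Fin.sum_univ_three, Matrix.of_apply,
      Matrix.cons_val, Fin.isValue, Fin.zero_eta, Fin.mk_one, Fin.reduceFinMk, Matrix.zero_apply,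
      Algebra.algebraMap_eq_smul_one, mul_neg, neg_mul, mul_sub, sub_mul, smul_mul_assoc,
      mul_smul_comm, one_mul, mul_one, mul_zero, h.y_mul_x, h.z_mul_x, h.z_mul_y] <;>
    module

theorem exact_koszulD₂_koszulD₁ (h : IsSkewTriple α β q x y z)
    (hreg : IsRightRegularTriple x y z) :
    Function.Exact (koszulD₂ α β q x y z).vecMulLinear (koszulD₁ x y z).vecMulLinear := by
  simp only [Function.Exact, Matrix.vecMulLinear_apply, Set.mem_range]
  refine fun v ↦ ⟨fun hv ↦ ?_, ?_⟩
  · have syzygy : v 0 * x + v 1 * y + v 2 * z = 0 := by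
      rw [vecMul_koszulD₁] at hv
      exact congrFun hv 0
    obtain ⟨s, t, hst⟩ := hreg.exists_eq_mul_y_add_mul_z
      (r := v 0) (s := -v 1) (t := -v 2) (by linear_combination (norm := noncomm_ring) syzygy)
    have relation_mod_z : (v 1 + s * x - α • s) * y = -(v 2 + t * x - β • t) * z := by
      rw [hst] at syzygy
      simp only [add_mul, sub_mul, neg_mul, mul_assoc, smul_mul_assoc, h.y_mul_x, h.z_mul_x,
        mul_sub, mul_smul_comm] at syzygy ⊢
      linear_combination (norm := module) syzygy
    obtain ⟨u, hu⟩ := hreg.exists_eq_mul_z relation_mod_z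
    have coeff_z : -(v 2 + t * x - β • t) = q • (u * y) := by
      refine hreg.isRightRegular_z ?_
      simp only [← relation_mod_z, hu, mul_assoc, h.z_mul_y, mul_smul_comm, smul_mul_assoc]
    refine ⟨![-s, -t, u], ?_⟩
    rw [vecMul_koszulD₂]
    funext i
    fin_cases i
    · change -(-s * y + -t * z) = v 0
      linear_combination (norm := noncomm_ring) -hst
    · change -s * x - α • -s + u * z = v 1
      rw [neg_mul, smul_neg]
      linear_combination (norm := abel) -hu
    · change -t * x - β • -t - q • (u * y) = v 2
      rw [neg_mul, smul_neg]
      linear_combination (norm := abel) coeff_z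
  · rintro ⟨w, rfl⟩
    rw [Matrix.vecMul_vecMul, h.koszulD₂_mul_koszulD₁, Matrix.vecMul_zero]

theorem exact_koszulD₃_koszulD₂ (h : IsSkewTriple α β q x y z)
    (hreg : IsRightRegularTriple x y z) :
    Function.Exact (koszulD₃ α β q x y z).vecMulLinear (koszulD₂ α β q x y z).vecMulLinear := by
  simp only [Function.Exact, Matrix.vecMulLinear_apply, Set.mem_range]
  refine fun v ↦ ⟨fun hv ↦ ?_, ?_⟩
  · rw [vecMul_koszulD₂] at hv
    have syzygy₀ : v 0 * y = -v 1 * z := by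
      rw [neg_mul]
      exact eq_neg_of_add_eq_zero_left (neg_eq_zero.1 (congrFun hv 0))
    have syzygy₁ : v 0 * x - α • v 0 + v 2 * z = 0 := congrFun hv 1
    obtain ⟨t, ht⟩ := hreg.exists_eq_mul_z syzygy₀
    have coeff₁ : v 1 = -(q • (t * y)) := by
      refine neg_injective (hreg.isRightRegular_z ?_)
      simp only [← syzygy₀, ht, mul_assoc, h.z_mul_y, mul_smul_comm, smul_mul_assoc, neg_neg]
    have coeff₂ : v 2 = (α + β) • t - t * x := by
      refine hreg.isRightRegular_z ?_
      simp only [ht, mul_assoc, h.z_mul_x, mul_sub, mul_smul_comm, sub_mul,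
        smul_mul_assoc] at syzygy₁ ⊢
      linear_combination (norm := module) syzygy₁
    refine ⟨![t], ?_⟩
    rw [vecMul_koszulD₃]
    funext i
    fin_cases i
    exacts [ht.symm, coeff₁.symm, coeff₂.symm]
  · rintro ⟨w, rfl⟩
    rw [Matrix.vecMul_vecMul, h.koszulD₃_mul_koszulD₂, Matrix.vecMul_zero]

end IsSkewTriple

theorem IsRightRegularTriple.vecMulLinear_koszulD₃_injective (hreg : IsRightRegularTriple x y z)
    (α β q : K) : Function.Injective (koszulD₃ α β q x y z).vecMulLinear := by
  rw [injective_iff_map_eq_zero]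
  intro v hv
  rw [Matrix.vecMulLinear_apply, vecMul_koszulD₃] at hv
  have hv₀ : v 0 = 0 := hreg.isRightRegular_z ((congrFun hv 0).trans (zero_mul z).symm)
  funext i
  fin_cases i
  exact hv₀

/-- The differentials of the Koszul complex in all degrees. -/
def koszulD (α β q : K) (x y z : R) :
    ∀ n, Matrix (Fin (Nat.choose 3 (n + 1))) (Fin (Nat.choose 3 n)) R
  | 0 => koszulD₁ x y z
  | 1 => koszulD₂ α β q x y z
  | 2 => koszulD₃ α β q x y z
  | _ + 3 => 0

theorem IsSkewTriple.exact_koszulD (h : IsSkewTriple α β q x y z)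
    (hreg : IsRightRegularTriple x y z) : ∀ n, Function.Exact
      (koszulD α β q x y z (n + 1)).vecMulLinear (koszulD α β q x y z n).vecMulLinear
  | 0 => h.exact_koszulD₂_koszulD₁ hreg
  | 1 => h.exact_koszulD₃_koszulD₂ hreg
  | 2 => exact_zero_vecMulLinear (hreg.vecMulLinear_koszulD₃_injective α β q)
  | n + 3 =>
    have : IsEmpty (Fin (Nat.choose 3 (n + 4))) := by
      rw [Nat.choose_eq_zero_of_lt (by lia)]
      infer_instance
    exact_zero_vecMulLinear (Function.injective_of_subsingleton _)

end Koszul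

section Resolution

variable {K R : Type u} [Field K] [Ring R] [Algebra K R] {α β q : K} {x y z : R}

/-- The augmentation as a homomorphism of left modules. -/
noncomputable def augmentationMap (ε : R →ₐ[K] K) : R →ₗ[R] trivialModule ε :=
  LinearMap.toSpanSingleton R _ ((trivialModuleEquiv ε).symm 1)

theorem trivialModuleEquiv_augmentationMap (ε : R →ₐ[K] K) (r : R) :
    trivialModuleEquiv ε (augmentationMap ε r) = ε r := by
  rw [augmentationMap, LinearMap.toSpanSingleton_apply, trivialModuleEquiv_smul,
    LinearEquiv.apply_symm_apply, mul_one]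

theorem augmentationMap_eq_zero_iff (ε : R →ₐ[K] K) (r : R) :
    augmentationMap ε r = 0 ↔ ε r = 0 := by
  rw [← trivialModuleEquiv_augmentationMap, LinearEquiv.map_eq_zero_iff]

theorem augmentationMap_surjective (ε : R →ₐ[K] K) :
    Function.Surjective (augmentationMap ε) := fun t ↦
  ⟨algebraMap K R (trivialModuleEquiv ε t), (trivialModuleEquiv ε).injective <| by
    rw [trivialModuleEquiv_augmentationMap, AlgHom.commutes, Algebra.algebraMap_self_apply]⟩

theorem exact_koszulD₁_augmentationMap {ε : R →ₐ[K] K}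
    (hε : ∀ r, ε r = 0 ↔ ∃ s t u, r = s * x + t * y + u * z) :
    Function.Exact (koszulD₁ x y z).vecMulLinear (augmentationMap ε ∘ₗ LinearMap.proj 0) := by
  intro v
  simp only [LinearMap.comp_apply, LinearMap.proj_apply, augmentationMap_eq_zero_iff, hε,
    Set.mem_range, Matrix.vecMulLinear_apply, vecMul_koszulD₁]
  constructor
  · rintro ⟨s, t, u, hv⟩
    refine ⟨![s, t, u], funext fun i ↦ ?_⟩
    fin_cases i
    exact hv.symm
  · rintro ⟨w, rfl⟩
    exact ⟨w 0, w 1, w 2, rfl⟩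

/-- The Koszul resolution of the trivial module. -/
noncomputable def koszulResolution (h : IsSkewTriple α β q x y z)
    (hreg : IsRightRegularTriple x y z) {ε : R →ₐ[K] K}
    (hε : ∀ r, ε r = 0 ↔ ∃ s t u, r = s * x + t * y + u * z) :
    MatrixResolution R (trivialModule ε) where
  rank := Nat.choose 3
  d := koszulD α β q x y z
  exact_succ := h.exact_koszulD hreg
  π := augmentationMap ε ∘ₗ LinearMap.proj (0 : Fin 1)
  π_surjective := (augmentationMap_surjective ε).comp (Function.surjective_eval (0 : Fin 1))
  exact_zero := exact_koszulD₁_augmentationMap hε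

end Resolution

section Ranks

variable {K R : Type*} [Field K] [Ring R] [Algebra K R] {α β q : K} {x y z : R} {ε : R →ₐ[K] K}

theorem rank_superdiagonal {a b : K} (ha : a ≠ 0) (hb : b ≠ 0) :
    !![0, a, 0; 0, 0, b; 0, 0, 0].rank = 2 := by
  classical
  have shift_columns : !![0, a, 0; 0, 0, b; 0, 0, 0] =
      (Matrix.diagonal ![a, b, 0]).submatrix (Equiv.refl _) (Equiv.subRight 1) := by
    ext i j
    fin_cases i <;> fin_cases j <;> simp [Matrix.diagonal, ← Fin.val_inj]
  rw [shift_columns, Matrix.rank_submatrix, Matrix.rank_diagonal, Fintype.card_subtype]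
  simp [Fin.univ_succ, Finset.filter_insert, ha, hb]

theorem koszulD₁_map_eq_zero (hx : ε x = 0) (hy : ε y = 0) (hz : ε z = 0) :
    (koszulD₁ x y z).map ε = 0 := by
  ext i j
  fin_cases i <;> simp [koszulD₁, hx, hy, hz]

theorem koszulD₂_map (hx : ε x = 0) (hy : ε y = 0) (hz : ε z = 0) :
    (koszulD₂ α β q x y z).map ε = !![0, -α, 0; 0, 0, -β; 0, 0, 0] := by
  ext i j
  fin_cases i <;> fin_cases j <;> simp [koszulD₂, hx, hy, hz]

theorem koszulD₃_map (hx : ε x = 0) (hy : ε y = 0) (hz : ε z = 0) :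
    (koszulD₃ α β q x y z).map ε = !![0, 0, α + β] := by
  ext i j
  fin_cases j <;> simp [koszulD₃, hx, hy, hz]

theorem rank_koszulD_zero_map (hx : ε x = 0) (hy : ε y = 0) (hz : ε z = 0) :
    ((koszulD α β q x y z 0).map ε).rank = 0 := by
  change ((koszulD₁ x y z).map ε).rank = 0
  rw [koszulD₁_map_eq_zero hx hy hz, Matrix.rank_zero]

theorem rank_koszulD_one_map (hα : α ≠ 0) (hβ : β ≠ 0) (hx : ε x = 0) (hy : ε y = 0)
    (hz : ε z = 0) : ((koszulD α β q x y z 1).map ε).rank = 2 := by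
  change ((koszulD₂ α β q x y z).map ε).rank = 2
  rw [koszulD₂_map hx hy hz, rank_superdiagonal (neg_ne_zero.2 hα) (neg_ne_zero.2 hβ)]

theorem rank_koszulD_two_map_of_add_ne_zero (hαβ : α + β ≠ 0) (hx : ε x = 0) (hy : ε y = 0)
    (hz : ε z = 0) : ((koszulD α β q x y z 2).map ε).rank = 1 := by
  change ((koszulD₃ α β q x y z).map ε).rank = 1
  have row_ne_zero : !![0, 0, α + β] 0 ≠ 0 := fun h ↦ hαβ (congrFun h 2)
  rw [koszulD₃_map hx hy hz]
  exact (linearIndependent_unique_iff.2 row_ne_zero).rank_matrix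

theorem rank_koszulD_two_map_of_add_eq_zero (hαβ : α + β = 0) (hx : ε x = 0) (hy : ε y = 0)
    (hz : ε z = 0) : ((koszulD α β q x y z 2).map ε).rank = 0 := by
  change ((koszulD₃ α β q x y z).map ε).rank = 0
  have eq_zero : !![0, 0, α + β] = 0 := by
    ext i j
    fin_cases j <;> simp [hαβ]
  rw [koszulD₃_map hx hy hz, eq_zero, Matrix.rank_zero]

theorem rank_koszulD_add_three_map (n : ℕ) :
    ((koszulD α β q x y z (n + 3)).map ε).rank = 0 := by
  rw [koszulD, Matrix.map_zero _ (map_zero ε), Matrix.rank_zero]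

end Ranks

/-! ### The PBW theorem -/

section PBWSpace

variable {K : Type*} [CommRing K]

variable (K) in
/-- The space of formal sums of PBW monomials: the polynomial `p` at the index `(a, b)` stands for
`p(x) * y ^ a * z ^ b`. -/
abbrev PBWSpace : Type _ := ℕ × ℕ →₀ K[X]

namespace PBWSpace

open MulOpposite

/-- Right multiplication by `x` on PBW monomials; moving `x` to the left of `y ^ a * z ^ b` shifts
it by the weight `a * α + b * β`. -/
noncomputable def mulX (α β : K) : Module.End K (PBWSpace K) :=
  Finsupp.lsum K fun m ↦ Finsupp.lsingle m ∘ₗ LinearMap.mulRight K (X - C (m.1 * α + m.2 * β))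

/-- Right multiplication by `y` on PBW monomials. -/
noncomputable def mulY (q : K) : Module.End K (PBWSpace K) :=
  Finsupp.lsum K fun m ↦ q ^ m.2 • Finsupp.lsingle (m.1 + 1, m.2)

variable (K) in
/-- Right multiplication by `z` on PBW monomials. -/
noncomputable def mulZ : Module.End K (PBWSpace K) :=
  Finsupp.lsum K fun m ↦ Finsupp.lsingle (m.1, m.2 + 1)

@[simp]
theorem mulX_single (α β : K) (m : ℕ × ℕ) (p : K[X]) :
    mulX α β (Finsupp.single m p) =
      Finsupp.single m (p * (X - C (m.1 * α + m.2 * β))) := by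
  simp only [mulX, Finsupp.lsum_single, LinearMap.comp_apply, LinearMap.mulRight_apply,
    Finsupp.lsingle_apply]

@[simp]
theorem mulY_single (q : K) (m : ℕ × ℕ) (p : K[X]) :
    mulY q (Finsupp.single m p) = q ^ m.2 • Finsupp.single (m.1 + 1, m.2) p := by
  simp only [mulY, Finsupp.lsum_single, LinearMap.smul_apply, Finsupp.lsingle_apply]

@[simp]
theorem mulZ_single (m : ℕ × ℕ) (p : K[X]) :
    mulZ K (Finsupp.single m p) = Finsupp.single (m.1, m.2 + 1) p := by
  simp only [mulZ, Finsupp.lsum_single, Finsupp.lsingle_apply]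

theorem isSkewTriple_op_mul (α β q : K) :
    IsSkewTriple α β q (op (mulX α β)) (op (mulY q)) (op (mulZ K)) where
  y_mul_x := by
    refine unop_injective (Finsupp.lhom_ext fun m p ↦ ?_)
    simp only [unop_mul, MulOpposite.unop_sub, unop_smul, unop_op, Module.End.mul_apply,
      LinearMap.sub_apply, LinearMap.smul_apply, mulX_single, mulY_single, map_smul]
    rw [smul_comm α, ← smul_sub, Finsupp.smul_single α, ← Finsupp.single_sub]
    congr 2
    simp only [smul_eq_C_mul, map_add, map_mul, Nat.cast_succ, map_one]
    ring
  z_mul_x := by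
    refine unop_injective (Finsupp.lhom_ext fun m p ↦ ?_)
    simp only [unop_mul, MulOpposite.unop_sub, unop_smul, unop_op, Module.End.mul_apply,
      LinearMap.sub_apply, LinearMap.smul_apply, mulX_single, mulZ_single]
    rw [Finsupp.smul_single, ← Finsupp.single_sub]
    congr 1
    simp only [smul_eq_C_mul, map_add, map_mul, Nat.cast_succ, map_one]
    ring
  z_mul_y := by
    refine unop_injective (Finsupp.lhom_ext fun m p ↦ ?_)
    simp only [unop_mul, unop_smul, unop_op, Module.End.mul_apply, LinearMap.smul_apply,
      mulY_single, mulZ_single, map_smul, pow_succ', mul_smul]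

theorem mulX_apply_zero (α β : K) (f : PBWSpace K) : mulX α β f (0, 0) = f (0, 0) * X := by
  induction f using Finsupp.induction_linear with
  | zero => simp
  | add f g hf hg => simp [hf, hg, add_mul]
  | single m p =>
    rw [mulX_single, Finsupp.single_apply, Finsupp.single_apply]
    split_ifs with h <;> simp [h]

theorem mulY_apply_succ_zero (q : K) (f : PBWSpace K) (a : ℕ) : mulY q f (a + 1, 0) = f (a, 0) := by
  induction f using Finsupp.induction_linear with
  | zero => simp
  | add f g hf hg => simp [hf, hg]
  | single m p =>
    obtain ⟨i, j⟩ := m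
    rw [mulY_single, Finsupp.smul_apply, Finsupp.single_apply, Finsupp.single_apply]
    by_cases hj : j = 0 <;> simp [hj]

theorem mulY_apply_zero_left (q : K) (f : PBWSpace K) (b : ℕ) : mulY q f (0, b) = 0 := by
  induction f using Finsupp.induction_linear with
  | zero => simp
  | add f g hf hg => simp [hf, hg]
  | single m p => simp

theorem mulZ_apply_succ (f : PBWSpace K) (a b : ℕ) : mulZ K f (a, b + 1) = f (a, b) := by
  induction f using Finsupp.induction_linear with
  | zero => simp
  | add f g hf hg => simp [hf, hg]
  | single m p =>
    obtain ⟨i, j⟩ := m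
    simp [Finsupp.single_apply]

theorem mulZ_apply_zero_right (f : PBWSpace K) (a : ℕ) : mulZ K f (a, 0) = 0 := by
  induction f using Finsupp.induction_linear with
  | zero => simp
  | add f g hf hg => simp [hf, hg]
  | single m p => simp

theorem mulZ_injective : Function.Injective (mulZ K) := fun f g hfg ↦ by
  ext1 ⟨a, b⟩
  rw [← mulZ_apply_succ f, hfg, mulZ_apply_succ]

theorem mem_range_mulZ {f : PBWSpace K} (hf : ∀ a, f (a, 0) = 0) :
    f ∈ LinearMap.range (mulZ K) := by
  rw [← f.sum_single]
  refine Submodule.sum_mem _ fun m hm ↦ ?_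
  obtain ⟨a, _ | b⟩ := m
  · exact absurd (hf a) (Finsupp.mem_support_iff.1 hm)
  · exact ⟨Finsupp.single (a, b) (f (a, b + 1)), mulZ_single ..⟩

theorem mem_range_mulY_sup_range_mulZ (q : K) {f : PBWSpace K} (hf : f (0, 0) = 0) :
    f ∈ LinearMap.range (mulY q) ⊔ LinearMap.range (mulZ K) := by
  rw [← f.sum_single]
  refine Submodule.sum_mem _ fun m hm ↦ ?_
  obtain ⟨_ | a, _ | b⟩ := m
  · exact absurd hf (Finsupp.mem_support_iff.1 hm)
  · exact Submodule.mem_sup_right ⟨Finsupp.single (0, b) (f (0, b + 1)), mulZ_single ..⟩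
  · exact Submodule.mem_sup_left ⟨Finsupp.single (a, 0) (f (a + 1, 0)), by simp⟩
  · exact Submodule.mem_sup_right ⟨Finsupp.single (a + 1, b) (f (a + 1, b + 1)), mulZ_single ..⟩

theorem eq_top_of_stable {α β q : K} {S : Submodule K (PBWSpace K)}
    (one_mem : Finsupp.single (0, 0) 1 ∈ S) (mulX_mem : ∀ f ∈ S, mulX α β f ∈ S)
    (mulY_mem : ∀ f ∈ S, mulY q f ∈ S) (mulZ_mem : ∀ f ∈ S, mulZ K f ∈ S) : S = ⊤ := by
  have X_pow_mem (n : ℕ) : Finsupp.single (0, 0) (X ^ n) ∈ S := by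
    induction n with
    | zero => simpa using one_mem
    | succ n ih => simpa [pow_succ] using mulX_mem _ ih
  have polynomial_mem (p : K[X]) : Finsupp.single (0, 0) p ∈ S := by
    induction p using Polynomial.induction_on' with
    | add p r hp hr => simpa using S.add_mem hp hr
    | monomial n c =>
      rw [← smul_X_eq_monomial, ← Finsupp.smul_single]
      exact S.smul_mem c (X_pow_mem n)
  have y_pow_mem (a : ℕ) (p : K[X]) : Finsupp.single (a, 0) p ∈ S := by
    induction a with
    | zero => exact polynomial_mem p
    | succ a ih => simpa using mulY_mem _ ih
  have z_pow_mem (a b : ℕ) (p : K[X]) : Finsupp.single (a, b) p ∈ S := by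
    induction b with
    | zero => exact y_pow_mem a p
    | succ b ih => simpa using mulZ_mem _ ih
  refine eq_top_iff.2 fun f _ ↦ ?_
  rw [← f.sum_single]
  exact S.sum_mem fun m _ ↦ z_pow_mem m.1 m.2 (f m)

end PBWSpace

end PBWSpace

section PBWMap

open MulOpposite

variable {K R : Type*} [CommRing K] [Ring R] [Algebra K R] {α β q : K} {x y z : R}

theorem pow_mul_eq_mul_pow_sub (h : y * x = x * y - α • y) (n : ℕ) :
    y ^ n * x = x * y ^ n - (n * α) • y ^ n := by
  induction n with
  | zero => simp
  | succ n ih =>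
    rw [pow_succ, mul_assoc, h, mul_sub, ← mul_assoc, ih, sub_mul, mul_assoc, mul_smul_comm,
      smul_mul_assoc, Nat.cast_succ]
    module

theorem pow_mul_eq_pow_smul_mul_pow (h : z * y = q • (y * z)) (n : ℕ) :
    z ^ n * y = q ^ n • (y * z ^ n) := by
  induction n with
  | zero => simp
  | succ n ih =>
    rw [pow_succ, mul_assoc, h, mul_smul_comm, ← mul_assoc, ih, smul_mul_assoc, smul_smul,
      mul_assoc, pow_succ']

theorem IsSkewTriple.pow_mul_pow_mul_x (h : IsSkewTriple α β q x y z) (a b : ℕ) :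
    y ^ a * z ^ b * x = (x - algebraMap K R (a * α + b * β)) * (y ^ a * z ^ b) := by
  rw [mul_assoc, pow_mul_eq_mul_pow_sub h.z_mul_x, mul_sub, ← mul_assoc,
    pow_mul_eq_mul_pow_sub h.y_mul_x, sub_mul, sub_mul, mul_smul_comm, smul_mul_assoc, mul_assoc,
    ← Algebra.smul_def]
  module

variable (K x y z) in
/-- Evaluation of formal sums of PBW monomials at elements of an algebra. -/
noncomputable def pbwMap : PBWSpace K →ₗ[K] R :=
  Finsupp.lsum K fun m ↦ LinearMap.mulRight K (y ^ m.1 * z ^ m.2) ∘ₗ (aeval x).toLinearMap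

theorem pbwMap_single (m : ℕ × ℕ) (p : K[X]) :
    pbwMap K x y z (Finsupp.single m p) = aeval x p * (y ^ m.1 * z ^ m.2) := by
  simp only [pbwMap, Finsupp.lsum_single, LinearMap.comp_apply, LinearMap.mulRight_apply,
    AlgHom.toLinearMap_apply]

theorem map_pbwMap {S : Type*} [Ring S] [Algebra K S] (φ : R →ₐ[K] S) (f : PBWSpace K) :
    φ (pbwMap K x y z f) = pbwMap K (φ x) (φ y) (φ z) f := by
  induction f using Finsupp.induction_linear with
  | zero => simp only [map_zero]
  | add f g hf hg => simp only [map_add, hf, hg]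
  | single m p => simp only [pbwMap_single, map_mul, map_pow, aeval_algHom_apply]

namespace IsSkewTriple

theorem pbwMap_mulX (h : IsSkewTriple α β q x y z) (f : PBWSpace K) :
    pbwMap K x y z (PBWSpace.mulX α β f) = pbwMap K x y z f * x := by
  induction f using Finsupp.induction_linear with
  | zero => simp only [map_zero, zero_mul]
  | add f g hf hg => simp only [map_add, hf, hg, add_mul]
  | single m p =>
    rw [PBWSpace.mulX_single, pbwMap_single, pbwMap_single, map_mul, map_sub, aeval_X, aeval_C,
      mul_assoc, mul_assoc, h.pow_mul_pow_mul_x]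

theorem pbwMap_mulY (h : IsSkewTriple α β q x y z) (f : PBWSpace K) :
    pbwMap K x y z (PBWSpace.mulY q f) = pbwMap K x y z f * y := by
  induction f using Finsupp.induction_linear with
  | zero => simp only [map_zero, zero_mul]
  | add f g hf hg => simp only [map_add, hf, hg, add_mul]
  | single m p =>
    rw [PBWSpace.mulY_single, map_smul, pbwMap_single, pbwMap_single, mul_assoc, mul_assoc,
      pow_mul_eq_pow_smul_mul_pow h.z_mul_y, mul_smul_comm, mul_smul_comm, ← mul_assoc (y ^ m.1),
      pow_succ]

end IsSkewTriple

theorem pbwMap_mulZ (f : PBWSpace K) :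
    pbwMap K x y z (PBWSpace.mulZ K f) = pbwMap K x y z f * z := by
  induction f using Finsupp.induction_linear with
  | zero => simp only [map_zero, zero_mul]
  | add f g hf hg => simp only [map_add, hf, hg, add_mul]
  | single m p => rw [PBWSpace.mulZ_single, pbwMap_single, pbwMap_single, mul_assoc, mul_assoc,
      pow_succ]

theorem pbwMap_one : pbwMap K x y z (Finsupp.single (0, 0) (1 : K[X])) = 1 := by
  simp only [pbwMap_single, map_one, pow_zero, mul_one]

namespace IsSkewTriple

theorem pbwMap_surjective (h : IsSkewTriple α β q x y z)
    (adjoin_eq_top : Algebra.adjoin K {x, y, z} = ⊤) :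
    Function.Surjective (pbwMap K x y z) := by
  have mul_mem_range (r : R) :
      ∀ s ∈ LinearMap.range (pbwMap K x y z), s * r ∈ LinearMap.range (pbwMap K x y z) := by
    induction (adjoin_eq_top ▸ trivial : r ∈ Algebra.adjoin K {x, y, z})
      using Algebra.adjoin_induction with
    | mem r hr =>
      rintro _ ⟨f, rfl⟩
      obtain rfl | rfl | rfl := hr
      exacts [⟨_, h.pbwMap_mulX f⟩, ⟨_, h.pbwMap_mulY f⟩, ⟨_, pbwMap_mulZ f⟩]
    | algebraMap c =>
      intro s hs
      rw [← Algebra.commutes, ← Algebra.smul_def]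
      exact Submodule.smul_mem _ c hs
    | add r r' _ _ hr hr' =>
      intro s hs
      rw [mul_add]
      exact Submodule.add_mem _ (hr s hs) (hr' s hs)
    | mul r r' _ _ hr hr' =>
      intro s hs
      rw [← mul_assoc]
      exact hr' _ (hr s hs)
  exact fun r ↦ by simpa using mul_mem_range r 1 ⟨_, pbwMap_one⟩

end IsSkewTriple

/-- The linear independence half of the PBW theorem, for the action by right multiplication. -/
theorem PBWSpace.pbwMap_op_mul_apply_one (α β q : K) (f : PBWSpace K) :
    (pbwMap K (op (mulX α β)) (op (mulY q)) (op (mulZ K)) f).unop (Finsupp.single (0, 0) 1) =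
      f := by
  have h := isSkewTriple_op_mul α β q
  let act : PBWSpace K →ₗ[K] PBWSpace K :=
    LinearMap.applyₗ (Finsupp.single (0, 0) 1) ∘ₗ (opLinearEquiv K).symm.toLinearMap ∘ₗ
      pbwMap K (op (mulX α β)) (op (mulY q)) (op (mulZ K))
  have act_apply (f : PBWSpace K) : act f =
    (pbwMap K (op (mulX α β)) (op (mulY q)) (op (mulZ K)) f).unop (Finsupp.single (0, 0) 1) := rfl
  have act_eq_id : LinearMap.eqLocus act LinearMap.id = ⊤ := by
    refine eq_top_of_stable (α := α) (β := β) (q := q) ?_ ?_ ?_ ?_ <;>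
      simp only [LinearMap.mem_eqLocus, LinearMap.id_apply, act_apply]
    · rw [pbwMap_one, unop_one, Module.End.one_apply]
    · intro f hf
      rw [h.pbwMap_mulX, unop_mul, unop_op, Module.End.mul_apply, hf]
    · intro f hf
      rw [h.pbwMap_mulY, unop_mul, unop_op, Module.End.mul_apply, hf]
    · intro f hf
      rw [pbwMap_mulZ, unop_mul, unop_op, Module.End.mul_apply, hf]
  exact (act_eq_id ▸ Submodule.mem_top : f ∈ LinearMap.eqLocus act LinearMap.id)

theorem pbwMap_injective (φ : R →ₐ[K] (Module.End K (PBWSpace K))ᵐᵒᵖ)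
    (hx : φ x = op (PBWSpace.mulX α β)) (hy : φ y = op (PBWSpace.mulY q))
    (hz : φ z = op (PBWSpace.mulZ K)) : Function.Injective (pbwMap K x y z) := by
  intro f g hfg
  rw [← PBWSpace.pbwMap_op_mul_apply_one α β q f, ← PBWSpace.pbwMap_op_mul_apply_one α β q g,
    ← hx, ← hy, ← hz, ← map_pbwMap, ← map_pbwMap, hfg]

namespace IsSkewTriple

theorem isRightRegularTriple (h : IsSkewTriple α β q x y z)
    (bij : Function.Bijective (pbwMap K x y z)) : IsRightRegularTriple x y z where
  isRightRegular_z := by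
    intro r s hrs
    obtain ⟨f, rfl⟩ := bij.surjective r
    obtain ⟨g, rfl⟩ := bij.surjective s
    simp only [← pbwMap_mulZ] at hrs
    rw [PBWSpace.mulZ_injective (bij.injective hrs)]
  exists_eq_mul_z {r s} hrs := by
    obtain ⟨f, rfl⟩ := bij.surjective r
    obtain ⟨g, rfl⟩ := bij.surjective s
    rw [← h.pbwMap_mulY, ← pbwMap_mulZ] at hrs
    have coord_eq_zero (a : ℕ) : f (a, 0) = 0 := by
      rw [← PBWSpace.mulY_apply_succ_zero q f, bij.injective hrs, PBWSpace.mulZ_apply_zero_right]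
    obtain ⟨k, rfl⟩ := PBWSpace.mem_range_mulZ coord_eq_zero
    exact ⟨_, pbwMap_mulZ k⟩
  exists_eq_mul_y_add_mul_z {r s t} hrst := by
    obtain ⟨f, rfl⟩ := bij.surjective r
    obtain ⟨g, rfl⟩ := bij.surjective s
    obtain ⟨k, rfl⟩ := bij.surjective t
    rw [← h.pbwMap_mulX, ← h.pbwMap_mulY, ← pbwMap_mulZ, ← map_add] at hrst
    have coord_eq_zero : f (0, 0) = 0 := by
      refine isRegular_X.right.mul_right_eq_zero_iff.1 ?_
      rw [← PBWSpace.mulX_apply_zero α β f, bij.injective hrst, Finsupp.add_apply,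
        PBWSpace.mulY_apply_zero_left, PBWSpace.mulZ_apply_zero_right, add_zero]
    obtain ⟨_, ⟨g', rfl⟩, _, ⟨k', rfl⟩, rfl⟩ :=
      Submodule.mem_sup.1 (PBWSpace.mem_range_mulY_sup_range_mulZ q coord_eq_zero)
    exact ⟨_, _, by rw [map_add, h.pbwMap_mulY, pbwMap_mulZ]⟩

theorem exists_eq_algebraMap_add (h : IsSkewTriple α β q x y z)
    (surj : Function.Surjective (pbwMap K x y z)) (r : R) :
    ∃ c s t u, r = algebraMap K R c + (s * x + t * y + u * z) := by
  obtain ⟨f, rfl⟩ := surj r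
  let const : PBWSpace K := Finsupp.single (0, 0) (C ((f (0, 0)).coeff 0))
  let quot : PBWSpace K := Finsupp.single (0, 0) (f (0, 0)).divX
  have coord_eq_zero : (f - const - PBWSpace.mulX α β quot) (0, 0) = 0 := by
    simp only [Finsupp.sub_apply, PBWSpace.mulX_apply_zero, const, quot, Finsupp.single_eq_same]
    linear_combination -divX_mul_X_add (f (0, 0))
  obtain ⟨_, ⟨g, rfl⟩, _, ⟨k, rfl⟩, hgk⟩ :=
    Submodule.mem_sup.1 (PBWSpace.mem_range_mulY_sup_range_mulZ q coord_eq_zero)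
  have pbwMap_const : pbwMap K x y z const = algebraMap K R ((f (0, 0)).coeff 0) := by
    simp only [const, pbwMap_single, aeval_C, pow_zero, mul_one]
  refine ⟨(f (0, 0)).coeff 0, pbwMap K x y z quot, pbwMap K x y z g, pbwMap K x y z k, ?_⟩
  rw [← pbwMap_const, ← h.pbwMap_mulX, ← h.pbwMap_mulY, ← pbwMap_mulZ, ← map_add, ← map_add,
    ← map_add, add_assoc, hgk]
  congr 1
  abel

theorem augmentation_eq_zero_iff (h : IsSkewTriple α β q x y z)
    (surj : Function.Surjective (pbwMap K x y z)) {ε : R →ₐ[K] K} (hx : ε x = 0) (hy : ε y = 0)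
    (hz : ε z = 0) (r : R) : ε r = 0 ↔ ∃ s t u, r = s * x + t * y + u * z := by
  have map_combination (s t u : R) : ε (s * x + t * y + u * z) = 0 := by
    simp only [map_add, map_mul, hx, hy, hz, mul_zero, add_zero]
  constructor
  · intro hr
    obtain ⟨c, s, t, u, rfl⟩ := h.exists_eq_algebraMap_add surj r
    rw [map_add, map_combination, add_zero, AlgHom.commutes, Algebra.algebraMap_self_apply] at hr
    exact ⟨s, t, u, by rw [hr, map_zero, zero_add]⟩
  · rintro ⟨s, t, u, rfl⟩
    exact map_combination s t u

end IsSkewTriple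

end PBWMap

/-! ### Betti numbers -/

section BettiNumbers

variable {K R : Type u} [Field K] [Ring R] [Algebra K R] {α β q : K} {x y z : R}

theorem map_eq_zero_of_mul_eq_mul_sub (h : y * x = x * y - α • y) (hα : α ≠ 0) (ε : R →ₐ[K] K) :
    ε y = 0 := by
  have map_relation := congrArg ε h
  rw [map_mul, map_sub, map_mul, map_smul, smul_eq_mul] at map_relation
  refine (mul_eq_zero.1 ?_).resolve_left hα
  linear_combination map_relation

theorem betti_numbers_general (h : IsSkewTriple α β q x y z)
    (hpbw : Function.Bijective (pbwMap K x y z)) (hα : α ≠ 0) (hβ : β ≠ 0) (ε : R →ₐ[K] K)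
    (hx : ε x = 0) :
    (α + β ≠ 0 → bettiNumber ε 0 = 1 ∧ bettiNumber ε 1 = 1 ∧ ∀ n ≥ 2, bettiNumber ε n = 0) ∧
    (α + β = 0 → bettiNumber ε 0 = 1 ∧ bettiNumber ε 1 = 1 ∧ bettiNumber ε 2 = 1 ∧
      bettiNumber ε 3 = 1 ∧ ∀ n ≥ 4, bettiNumber ε n = 0) := by
  have hy : ε y = 0 := map_eq_zero_of_mul_eq_mul_sub h.y_mul_x hα ε
  have hz : ε z = 0 := map_eq_zero_of_mul_eq_mul_sub h.z_mul_x hβ ε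
  let r (n : ℕ) : ℕ := ((koszulD α β q x y z n).map ε).rank
  let F := koszulResolution h (h.isRightRegularTriple hpbw)
    (h.augmentation_eq_zero_iff hpbw.surjective hx hy hz)
  have betti_zero : bettiNumber ε 0 + r 0 = 1 := F.bettiNumber_zero_add_rank
  have betti_succ (n : ℕ) : bettiNumber ε (n + 1) + r (n + 1) + r n = Nat.choose 3 (n + 1) :=
    F.bettiNumber_succ_add_rank_add_rank n
  have betti_add_four (n : ℕ) : bettiNumber ε (n + 4) = 0 := by
    have := betti_succ (n + 3)
    rw [Nat.choose_eq_zero_of_lt (by lia)] at this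
    lia
  have r₀ : r 0 = 0 := rank_koszulD_zero_map hx hy hz
  have r₁ : r 1 = 2 := rank_koszulD_one_map hα hβ hx hy hz
  have r₃ : r 3 = 0 := rank_koszulD_add_three_map 0
  have betti_one : bettiNumber ε 1 + r 1 + r 0 = 3 := betti_succ 0
  have betti_two : bettiNumber ε 2 + r 2 + r 1 = 3 := betti_succ 1
  have betti_three : bettiNumber ε 3 + r 3 + r 2 = 1 := betti_succ 2
  constructor
  · intro hαβ
    have r₂ : r 2 = 1 := rank_koszulD_two_map_of_add_ne_zero hαβ hx hy hz
    refine ⟨by lia, by lia, fun n hn ↦ ?_⟩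
    obtain _ | _ | _ | _ | n := n
    all_goals first | lia | exact betti_add_four n
  · intro hαβ
    have r₂ : r 2 = 0 := rank_koszulD_two_map_of_add_eq_zero hαβ hx hy hz
    refine ⟨by lia, by lia, by lia, by lia, fun n hn ↦ ?_⟩
    obtain ⟨n, rfl⟩ := Nat.exists_eq_add_of_le' hn
    exact betti_add_four n

end BettiNumbers

section CRel

open MulOpposite

theorem isSkewTriple_neg_one_iff {K R : Type*} [CommRing K] [Ring R] [Algebra K R] {α β : K}
    {x y z : R} : IsSkewTriple α β (-1) x y z ↔
      x * y - y * x = α • y ∧ x * z - z * x = β • z ∧ y * z + z * y = 0 := by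
  have y_mul_x_iff : y * x = x * y - α • y ↔ x * y - y * x = α • y := by
    rw [eq_sub_iff_add_eq, sub_eq_iff_eq_add', eq_comm]
  have z_mul_x_iff : z * x = x * z - β • z ↔ x * z - z * x = β • z := by
    rw [eq_sub_iff_add_eq, sub_eq_iff_eq_add', eq_comm]
  have z_mul_y_iff : z * y = (-1 : K) • (y * z) ↔ y * z + z * y = 0 := by
    rw [neg_one_smul, eq_neg_iff_add_eq_zero, add_comm]
  rw [← y_mul_x_iff, ← z_mul_x_iff, ← z_mul_y_iff]
  exact ⟨fun h ↦ ⟨h.y_mul_x, h.z_mul_x, h.z_mul_y⟩, fun ⟨hyx, hzx, hzy⟩ ↦ ⟨hyx, hzx, hzy⟩⟩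

variable (μ : ℂ)

/-- The class of the generator `e_{i+1}` in the quotient by `CRel μ`. -/
noncomputable def gen (i : Fin 3) : RingQuot (CRel μ) :=
  RingQuot.mkAlgHom ℂ (CRel μ) (ι ℂ i)

theorem isSkewTriple_gen : IsSkewTriple μ 1 (-1) (gen μ 0) (gen μ 1) (gen μ 2) := by
  refine isSkewTriple_neg_one_iff.2 ⟨?_, ?_, ?_⟩
  · simpa only [gen, map_sub, map_mul, map_smul] using
      RingQuot.mkAlgHom_rel ℂ (CRel.r12 (μ := μ))
  · simpa only [gen, map_sub, map_mul, one_smul] using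
      RingQuot.mkAlgHom_rel ℂ (CRel.r13 (μ := μ))
  · simpa only [gen, map_add, map_mul, map_zero] using
      RingQuot.mkAlgHom_rel ℂ (CRel.r23 (μ := μ))

theorem adjoin_gen : Algebra.adjoin ℂ {gen μ 0, gen μ 1, gen μ 2} = ⊤ := by
  have range_gen : Set.range (RingQuot.mkAlgHom ℂ (CRel μ) ∘ ι ℂ) =
      {gen μ 0, gen μ 1, gen μ 2} := by
    ext r
    simp [Fin.exists_fin_succ, gen, eq_comm]
  rw [← range_gen, Set.range_comp, ← AlgHom.map_adjoin, FreeAlgebra.adjoin_range_ι,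
    Algebra.map_top, AlgHom.range_eq_top]
  exact RingQuot.mkAlgHom_surjective ℂ (CRel μ)

theorem lift_eq_of_cRel {μ : ℂ} {A : Type*} [Ring A] [Algebra ℂ A] {x y z : A}
    (h : IsSkewTriple μ 1 (-1) x y z) ⦃a b : FreeAlgebra ℂ (Fin 3)⦄ (hab : CRel μ a b) :
    FreeAlgebra.lift ℂ ![x, y, z] a = FreeAlgebra.lift ℂ ![x, y, z] b := by
  obtain ⟨xy, xz, yz⟩ := isSkewTriple_neg_one_iff.1 h
  rw [one_smul] at xz
  obtain _ | _ | _ := hab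
  all_goals simp [xy, xz, yz]

/-- The action of the quotient by `CRel μ` on the PBW space by right multiplication. -/
noncomputable def pbwAction : RingQuot (CRel μ) →ₐ[ℂ] (Module.End ℂ (PBWSpace ℂ))ᵐᵒᵖ :=
  RingQuot.liftAlgHom ℂ ⟨FreeAlgebra.lift ℂ _,
    lift_eq_of_cRel (PBWSpace.isSkewTriple_op_mul μ 1 (-1))⟩

theorem pbwAction_gen (i : Fin 3) : pbwAction μ (gen μ i) =
    ![op (PBWSpace.mulX μ 1), op (PBWSpace.mulY (-1)), op (PBWSpace.mulZ ℂ)] i := by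
  rw [pbwAction, gen, RingQuot.liftAlgHom_mkAlgHom_apply, FreeAlgebra.lift_ι_apply]

theorem pbwMap_gen_bijective : Function.Bijective (pbwMap ℂ (gen μ 0) (gen μ 1) (gen μ 2)) :=
  ⟨pbwMap_injective (pbwAction μ) (pbwAction_gen μ 0) (pbwAction_gen μ 1) (pbwAction_gen μ 2),
    (isSkewTriple_gen μ).pbwMap_surjective (adjoin_gen μ)⟩

end CRel

theorem betti_numbers (μ : ℂ) (hμ : μ ≠ 0) (ε : RingQuot (CRel μ) →ₐ[ℂ] ℂ)
    (hε : ∀ i : Fin 3, ε (RingQuot.mkAlgHom ℂ (CRel μ) (ι ℂ i)) = 0) :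
    (μ ≠ -1 →
      extDim (RingQuot (CRel μ)) ε 0 = 1 ∧ extDim (RingQuot (CRel μ)) ε 1 = 1 ∧
      ∀ n ≥ 2, extDim (RingQuot (CRel μ)) ε n = 0) ∧
    (μ = -1 →
      extDim (RingQuot (CRel μ)) ε 0 = 1 ∧ extDim (RingQuot (CRel μ)) ε 1 = 1 ∧
      extDim (RingQuot (CRel μ)) ε 2 = 1 ∧ extDim (RingQuot (CRel μ)) ε 3 = 1 ∧
      ∀ n ≥ 4, extDim (RingQuot (CRel μ)) ε n = 0) := by
  rw [Ne, eq_neg_iff_add_eq_zero]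
  exact betti_numbers_general (isSkewTriple_gen μ) (pbwMap_gen_bijective μ) hμ one_ne_zero ε (hε 0)
end
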